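/- arXiv:1604.01101 — 4 statements merged into one kernel-verified Lean document; each statement's English description precedes it below -/
import Mathlib

section
/- Let λ be a hook partition (a, 1^b) of n that contains (2,1,1) (i.e., a ≥ 2 and b ≥ 2). If φ : S^λ → R_d is a nonzero S_n-equivariant map and I is the ideal generated by the image of φ, then I is not a complete intersection. -/
/-!
The images `F t` of the Specht polynomials, indexed by the filling `t` of the first column of the
hook, are permuted by the symmetric group, alternating in `t`, and satisfy the Garnir relation
`∑ j, F (t with x in place of t j) = F t`.

*Many generators are needed.* Symmetrize over the permutations that fix all entries of `t` except a
corner entry `o`. This kills every `F t'` with `o` and another moved entry in `t'`, but not `F t`: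
otherwise the sum of `F (t with x in place of o)` over `x` would vanish, by symmetry so would the
sums at all other places of all fillings, and summing the Garnir relation over `x` would give
`n • F t = 0` for all `t`. Hence the `F t` with fixed corner entry and varying remaining entries are
linearly independent. Being homogeneous of the same degree, they force every generating set of the
ideal to have at least `(n - 1).choose b` elements.

*A regular sequence in the ideal is short.* Collapsing the `n` variables to `b` of them by
identifying `n - b + 1` with each other kills every `F t`, since `t` has `b + 1` entries and two of
them become equal. The kernel of this substitution is a prime of height at most `n - b`, which
bounds the length of a regular sequence. But `n - b < n - 1 ≤ (n - 1).choose b`.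
-/

open MvPolynomial

noncomputable section

/-- An ideal is a complete intersection if it is generated by a regular sequence. -/
def IsCompleteIntersection {A : Type*} [CommRing A] (I : Ideal A) : Prop :=
  ∃ rs : List A, RingTheory.Sequence.IsRegular A rs ∧ Ideal.span {r | r ∈ rs} = I

/-- The Specht polynomial of a Young tableau `T` of shape `l = (λ_1,…,λ_r)`:
the product, over all pairs of boxes lying in the same column, of the
differences of the corresponding variables. -/
def spechtPoly (k : Type*) [Field k] {n : ℕ} (l : List ℕ)
    (T : (Σ i : Fin l.length, Fin (l.get i)) ≃ Fin n) : MvPolynomial (Fin n) k :=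
  ∏ p ∈ Finset.univ.filter
      (fun p : (Σ i : Fin l.length, Fin (l.get i)) × (Σ i : Fin l.length, Fin (l.get i)) =>
        (p.1.2 : ℕ) = (p.2.2 : ℕ) ∧ p.1.1 < p.2.1),
    (X (T p.1) - X (T p.2))

/-- The Specht module `S^λ`, realized inside `k[x_1,…,x_n]` as the span of the
Specht polynomials of all Young tableaux of shape `λ`. -/
def SpechtModule (k : Type*) [Field k] (n : ℕ) (l : List ℕ) :
    Submodule k (MvPolynomial (Fin n) k) :=
  Submodule.span k (Set.range (spechtPoly k (n := n) l))

theorem self_le_choose {n b : ℕ} (hb : 0 < b) (hbn : b < n) : n ≤ n.choose b := by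
  induction n, hbn using Nat.le_induction with
  | base => simp
  | succ n hn ih =>
    obtain ⟨b, rfl⟩ := Nat.exists_eq_succ_of_ne_zero hb.ne'
    have := Nat.choose_pos (show b ≤ n by omega)
    rw [Nat.choose_succ_succ]
    omega

theorem comp_swap_eq_self {α β : Type*} [DecidableEq α] {f : α → β} {x y : α} (h : f x = f y) :
    f ∘ Equiv.swap x y = f := by
  rw [Equiv.comp_swap_eq_update, h, Function.update_eq_self, ← h, Function.update_eq_self]

theorem linearIndependent_of_pairwise_apply_eq_zero {k κ M N : Type*} [DivisionRing k]
    [AddCommGroup M] [Module k M] [AddCommGroup N] [Module k N] {v : κ → M} (L : κ → M →ₗ[k] N)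
    (h0 : Pairwise fun c d => L c (v d) = 0) (h1 : ∀ c, L c (v c) ≠ 0) :
    LinearIndependent k v := by
  rw [linearIndependent_iff']
  intro s g hg c hc
  have hLc : g c • L c (v c) = 0 := by
    rw [← map_zero (L c), ← hg, map_sum, Finset.sum_eq_single_of_mem c hc, map_smul]
    intro d _ hdc
    rw [map_smul, h0 hdc.symm, smul_zero]
  exact (smul_eq_zero.mp hLc).resolve_right (h1 c)

theorem range_eq_span_range_apply {k κ M N : Type*} [Semiring k] [AddCommMonoid M] [Module k M]
    [AddCommMonoid N] [Module k N] {V : Submodule k M} {v : κ → M} (hv : ∀ c, v c ∈ V)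
    (hV : V ≤ Submodule.span k (Set.range v)) (φ : V →ₗ[k] N) :
    LinearMap.range φ = Submodule.span k (Set.range fun c => φ ⟨v c, hv c⟩) := by
  have htop : Submodule.span k (Set.range fun c => (⟨v c, hv c⟩ : V)) = ⊤ := by
    refine Submodule.map_injective_of_injective V.subtype_injective ?_
    rw [Submodule.map_span, ← Set.range_comp, Submodule.map_subtype_top]
    exact le_antisymm (Submodule.span_le.mpr (Set.range_subset_iff.mpr hv)) hV
  rw [LinearMap.range_eq_map, ← htop, Submodule.map_span, ← Set.range_comp]
  rfl

theorem swap_mem_fixingSubgroup {α : Type*} [DecidableEq α] {s : Set α} {x y : α} (hx : x ∉ s)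
    (hy : y ∉ s) : Equiv.swap x y ∈ fixingSubgroup (Equiv.Perm α) s :=
  (mem_fixingSubgroup_iff _).mpr fun _ hz =>
    Equiv.swap_apply_of_ne_of_ne (ne_of_mem_of_not_mem hz hx) (ne_of_mem_of_not_mem hz hy)

theorem exists_injective_range_eq_insert {α : Type*} [DecidableEq α] {b : ℕ} {B : Finset α} {x : α}
    (hx : x ∉ B) (hB : B.card = b) :
    ∃ t : Fin (b + 1) → α, t.Injective ∧ t 0 = x ∧ Set.range t = (insert x B : Finset α) := by
  let e := (B.equivFinOfCardEq hB).symm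
  have hrange : Set.range (fun i => (e i : α)) = B := by
    rw [Set.range_comp' Subtype.val, e.range_eq_univ, Set.image_univ, Subtype.range_coe]
  refine ⟨Fin.cons x fun i => e i, Fin.cons_injective_iff.mpr ⟨?_, ?_⟩, Fin.cons_zero _ _, ?_⟩
  · rwa [hrange, Finset.mem_coe]
  · exact Subtype.val_injective.comp e.injective
  · rw [Fin.range_cons, hrange, Finset.coe_insert]

section GarnirFamily

open Equiv Function

variable {k α ι M N : Type*} [Field k] [Fintype ι] [DecidableEq ι]
  [AddCommGroup M] [Module k M] [AddCommGroup N] [Module k N]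

/-- The relations between the polytabloids of a hook, each indexed by the filling `t : ι → α` of
the first column. The filling need not be injective, and `ρ` records how the permutations of the
entries act; it is not required to be a representation. -/
structure IsGarnirFamily (ρ : Perm α → M →ₗ[k] M) (F : (ι → α) → M) : Prop where
  map_perm : ∀ σ t, ρ σ (F t) = F (σ ∘ t)
  comp_swap : ∀ t {i j}, i ≠ j → F (t ∘ swap i j) = -F t
  garnir : ∀ t x, ∑ i, F (update t i x) = F t

open Classical in
/-- The sum of the action `ρ` over the permutations fixing `s` pointwise. With `s` the set of
entries of a hook tableau outside its first row, this is the row symmetrizer. -/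
def symmetrizer [Fintype α] (ρ : Perm α → M →ₗ[k] M) (s : Set α) : M →ₗ[k] M :=
  ∑ σ : fixingSubgroup (Perm α) s, ρ σ

namespace IsGarnirFamily

theorem map {ρ : Perm α → M →ₗ[k] M} {F : (ι → α) → M} (hF : IsGarnirFamily ρ F)
    {V : Submodule k M} (hV : ∀ t, F t ∈ V) {ρ' : Perm α → N →ₗ[k] N} (φ : V →ₗ[k] N)
    (hφ : ∀ σ (v w : V), (w : M) = ρ σ v → φ w = ρ' σ (φ v)) :
    IsGarnirFamily ρ' fun t => φ ⟨F t, hV t⟩ where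
  map_perm σ t := (hφ σ ⟨F t, hV t⟩ ⟨F (σ ∘ t), hV _⟩ (hF.map_perm σ t).symm).symm
  comp_swap t i j hij := by
    rw [← map_neg]
    exact congrArg φ (Subtype.ext (hF.comp_swap t hij))
  garnir t x := by
    rw [← map_sum]
    exact congrArg φ (Subtype.ext (by simpa using hF.garnir t x))

variable {ρ : Perm α → M →ₗ[k] M} {F : (ι → α) → M}

theorem map_swap [DecidableEq α] (hF : IsGarnirFamily ρ F) {t : ι → α} (ht : Injective t) {i j : ι}
    (hij : i ≠ j) : ρ (swap (t i) (t j)) (F t) = -F t := by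
  rw [hF.map_perm, ht.swap_comp, hF.comp_swap t hij]

theorem eq_zero_of_not_injective [IsAddTorsionFree M] (hF : IsGarnirFamily ρ F) {t : ι → α}
    (ht : ¬ Injective t) : F t = 0 := by
  obtain ⟨i, j, htij, hij⟩ := not_injective_iff.mp ht
  exact self_eq_neg.mp (by simpa only [comp_swap_eq_self htij] using hF.comp_swap t hij)

variable [Fintype α]

theorem card_smul_eq_sum (hF : IsGarnirFamily ρ F) (t : ι → α) :
    Fintype.card α • F t = ∑ i, ∑ x, F (update t i x) := by
  rw [Finset.sum_comm, Finset.sum_congr rfl fun x _ => hF.garnir t x, Finset.sum_const,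
    Finset.card_univ]

theorem sum_update_perm_comp (hF : IsGarnirFamily ρ F) (σ : Perm α) (t : ι → α) (i : ι) :
    ∑ x, F (update (σ ∘ t) i x) = ρ σ (∑ x, F (update t i x)) := by
  rw [map_sum, ← Equiv.sum_comp σ]
  simp only [hF.map_perm, comp_update]

theorem sum_update_comp_swap (hF : IsGarnirFamily ρ F) (t : ι → α) {i j : ι} (hij : i ≠ j) :
    ∑ x, F (update (t ∘ swap i j) i x) = -∑ x, F (update t j x) := by
  simp only [← Finset.sum_neg_distrib, ← hF.comp_swap _ hij]
  refine Finset.sum_congr rfl fun x _ => congrArg F ?_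
  rw [update_comp_equiv, symm_swap, swap_apply_right]

theorem eq_zero_of_sum_update_eq_zero [IsAddTorsionFree M] (hF : IsGarnirFamily ρ F) {t : ι → α}
    (ht : Injective t) {i : ι} (hsum : ∑ x, F (update t i x) = 0) : F = 0 := by
  have hrow_i : ∀ s : ι → α, Injective s → ∑ x, F (update s i x) = 0 := by
    intro s hs
    obtain ⟨σ, hσ⟩ := Perm.exists_extending_pair t s ht hs
    rw [← show σ ∘ t = s from funext hσ, hF.sum_update_perm_comp, hsum, map_zero]
  have hrow : ∀ s : ι → α, Injective s → ∀ j, ∑ x, F (update s j x) = 0 := by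
    intro s hs j
    obtain rfl | hij := eq_or_ne i j
    · exact hrow_i s hs
    · rw [← neg_eq_zero, ← hF.sum_update_comp_swap s hij]
      exact hrow_i _ (hs.comp (swap i j).injective)
  funext s
  by_cases hs : Injective s
  · have : Nonempty α := ⟨t i⟩
    refine (smul_eq_zero_iff_right (Fintype.card_ne_zero (α := α))).mp ?_
    rw [hF.card_smul_eq_sum, Finset.sum_eq_zero fun j _ => hrow s hs j]
  · exact hF.eq_zero_of_not_injective hs

open Classical in
theorem symmetrizer_apply (hF : IsGarnirFamily ρ F) (s : Set α) (t : ι → α) :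
    symmetrizer ρ s (F t) = ∑ σ : fixingSubgroup (Perm α) s, F (σ ∘ t) := by
  simp only [symmetrizer, LinearMap.sum_apply, hF.map_perm]

theorem symmetrizer_perm_comp (hF : IsGarnirFamily ρ F) {s : Set α} {τ : Perm α}
    (hτ : τ ∈ fixingSubgroup (Perm α) s) (t : ι → α) :
    symmetrizer ρ s (F (τ ∘ t)) = symmetrizer ρ s (F t) := by
  classical
  rw [hF.symmetrizer_apply, hF.symmetrizer_apply]
  exact Equiv.sum_comp (Equiv.mulRight ⟨τ, hτ⟩)
    fun σ : fixingSubgroup (Perm α) s => F (σ ∘ t)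

theorem symmetrizer_eq_zero [IsAddTorsionFree M] (hF : IsGarnirFamily ρ F) {s : Set α} {t : ι → α}
    (ht : Injective t) {i j : ι} (hij : i ≠ j) (hi : t i ∉ s) (hj : t j ∉ s) :
    symmetrizer ρ s (F t) = 0 := by
  classical
  have hswap := hF.symmetrizer_perm_comp (swap_mem_fixingSubgroup hi hj) t
  rw [← hF.map_perm, hF.map_swap ht hij, map_neg] at hswap
  exact neg_eq_self.mp hswap

theorem symmetrizer_update [IsAddTorsionFree M] (hF : IsGarnirFamily ρ F) {t : ι → α}
    (ht : Injective t) (i : ι) {x : α} (hx : x ∉ t '' {i}ᶜ) :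
    symmetrizer ρ (t '' {i}ᶜ) (F (update t i x)) = symmetrizer ρ (t '' {i}ᶜ) (F t) := by
  classical
  have hti : t i ∉ t '' {i}ᶜ := by simp [ht.mem_set_image]
  have hswap : swap (t i) x ∘ t = update t i x := by
    refine eq_update_iff.mpr ⟨swap_apply_left _ _, fun j hj => ?_⟩
    have hmem : t j ∈ t '' {i}ᶜ := Set.mem_image_of_mem t hj
    exact swap_apply_of_ne_of_ne (ne_of_mem_of_not_mem hmem hti) (ne_of_mem_of_not_mem hmem hx)
  rw [← hswap, hF.symmetrizer_perm_comp (swap_mem_fixingSubgroup hti hx)]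

theorem symmetrizer_sum_update (hF : IsGarnirFamily ρ F) (t : ι → α) (i : ι) :
    symmetrizer ρ (t '' {i}ᶜ) (∑ x, F (update t i x)) =
      Nat.card (fixingSubgroup (Perm α) (t '' {i}ᶜ)) • ∑ x, F (update t i x) := by
  classical
  have hfix (σ : fixingSubgroup (Perm α) (t '' {i}ᶜ)) :
      ρ σ (∑ x, F (update t i x)) = ∑ x, F (update t i x) := by
    rw [← hF.sum_update_perm_comp]
    refine Finset.sum_congr rfl fun x _ => congrArg F ?_
    refine update_eq_iff.mpr ⟨(update_self i x t).symm, fun j hj => ?_⟩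
    rw [update_of_ne hj]
    exact (mem_fixingSubgroup_iff _).mp σ.2 _ (Set.mem_image_of_mem t hj)
  simp only [symmetrizer, LinearMap.sum_apply, hfix, Finset.sum_const, Finset.card_univ,
    Nat.card_eq_fintype_card]

theorem symmetrizer_ne_zero [IsAddTorsionFree M] (hF : IsGarnirFamily ρ F) (hne : F ≠ 0)
    {t : ι → α} (ht : Injective t) (i : ι) : symmetrizer ρ (t '' {i}ᶜ) (F t) ≠ 0 := by
  intro hzero
  have hupdate (x : α) : symmetrizer ρ (t '' {i}ᶜ) (F (update t i x)) = 0 := by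
    by_cases hx : x ∈ t '' {i}ᶜ
    · obtain ⟨j, hj, rfl⟩ := hx
      have hninj : ¬ Injective (update t i (t j)) := fun h =>
        hj (h (by rw [update_self, update_of_ne hj]))
      rw [hF.eq_zero_of_not_injective hninj, map_zero]
    · rw [hF.symmetrizer_update ht i hx, hzero]
  have hsum := hF.symmetrizer_sum_update t i
  rw [map_sum, Finset.sum_eq_zero fun x _ => hupdate x, eq_comm,
    smul_eq_zero_iff_right Nat.card_pos.ne'] at hsum
  exact hne (hF.eq_zero_of_sum_update_eq_zero ht hsum)

omit [Fintype α] in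
theorem linearIndependent [Finite α] [IsAddTorsionFree M] (hF : IsGarnirFamily ρ F) (hne : F ≠ 0)
    {κ : Type*} {T : κ → ι → α} (hT : ∀ c, Injective (T c)) {i : ι}
    (hbase : ∀ c d, T c i = T d i) (hrange : Injective fun c => Set.range (T c)) :
    LinearIndependent k fun c => F (T c) := by
  cases nonempty_fintype α
  refine linearIndependent_of_pairwise_apply_eq_zero (fun c => symmetrizer ρ (T c '' {i}ᶜ))
    (fun c d hcd => ?_) fun c => hF.symmetrizer_ne_zero hne (hT c) i
  have hnsub : ¬ Set.range (T d) ⊆ Set.range (T c) := fun hsub =>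
    hcd.symm (hrange (Set.eq_of_subset_of_ncard_le hsub (by
      rw [Set.ncard_range_of_injective (hT c), Set.ncard_range_of_injective (hT d)])))
  obtain ⟨_, ⟨j, rfl⟩, hj⟩ := Set.not_subset.mp hnsub
  have hij : i ≠ j := by
    rintro rfl
    exact hj ⟨i, hbase c d⟩
  refine hF.symmetrizer_eq_zero (hT d) hij ?_ fun h => hj (Set.image_subset_range _ _ h)
  rw [hbase d c, (hT c).mem_set_image]
  exact fun h => h rfl

theorem choose_le_finrank_span [IsAddTorsionFree M] {b : ℕ} {F : (Fin (b + 1) → α) → M}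
    (hF : IsGarnirFamily ρ F) (hne : F ≠ 0) :
    (Fintype.card α - 1).choose b ≤ Module.finrank k (Submodule.span k (Set.range F)) := by
  classical
  obtain ⟨t, -⟩ := ne_iff.mp hne
  let κ := ((Finset.univ.erase (t 0)).powersetCard b : Finset (Finset α))
  have hcard (B : κ) : B.1.card = b := (Finset.mem_powersetCard.mp B.2).2
  have ht (B : κ) : t 0 ∉ B.1 := fun h => by simpa using (Finset.mem_powersetCard.mp B.2).1 h
  choose T hT hbase hrange using fun B : κ => exists_injective_range_eq_insert (ht B) (hcard B)
  have hrange_inj : Injective fun B => Set.range (T B) := by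
    intro B C hBC
    simp only [hrange, Finset.coe_inj] at hBC
    exact Subtype.ext (by rw [← Finset.erase_insert (ht B), hBC, Finset.erase_insert (ht C)])
  have hli : LinearIndependent k fun B => F (T B) :=
    hF.linearIndependent hne hT (fun B C => (hbase B).trans (hbase C).symm) hrange_inj
  have : Module.Finite k (Submodule.span k (Set.range F)) := .span_of_finite k (Set.finite_range F)
  calc (Fintype.card α - 1).choose b = Fintype.card κ := by
        rw [Fintype.card_coe, Finset.card_powersetCard,
          Finset.card_erase_of_mem (Finset.mem_univ _), Finset.card_univ]
    _ = Module.finrank k (Submodule.span k (Set.range fun B => F (T B))) :=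
        (finrank_span_eq_card hli).symm
    _ ≤ _ := Submodule.finrank_mono (Submodule.span_mono (Set.range_comp_subset_range T F))

end IsGarnirFamily
end GarnirFamily

theorem length_le_height_of_isRegular {A : Type*} [CommRing A] [IsNoetherianRing A]
    {p : Ideal A} [p.IsPrime] {rs : List A} (hrs : RingTheory.Sequence.IsRegular A rs)
    (hmem : ∀ r ∈ rs, r ∈ p) : (rs.length : ℕ∞) ≤ p.height := by
  let Ap := Localization.AtPrime p
  have hloc := hrs.1.isRegular_of_isLocalization_of_mem Ap p hmem
  have hdim := ringKrullDim_add_length_eq_ringKrullDim_of_isRegular _ hloc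
  rw [IsLocalization.AtPrime.ringKrullDim_eq_height p Ap, List.length_map] at hdim
  have : Nontrivial (Ap ⧸ Ideal.ofList (rs.map (algebraMap A Ap))) :=
    Ideal.Quotient.nontrivial_iff.mpr fun h => hloc.2 (by simp [h])
  exact WithBot.coe_le_coe.mp (hdim ▸ le_add_of_nonneg_left ringKrullDim_nonneg_of_nontrivial)

section MvPolynomial

variable {k σ : Type*} [Field k]

theorem ker_rename_eq_span {R : Type*} [CommRing R] {f : σ → σ} (hf : ∀ i, f (f i) = f i) :
    RingHom.ker (rename (R := R) f) =
      Ideal.span ((fun i => X i - X (f i)) '' {i | f i ≠ i}) := by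
  set J : Ideal (MvPolynomial σ R) := Ideal.span _ with hJ
  apply le_antisymm
  · have hmk : Ideal.Quotient.mkₐ R J = (Ideal.Quotient.mkₐ R J).comp (rename f) := by
      refine algHom_ext fun i => ?_
      rw [AlgHom.comp_apply, rename_X]
      refine Ideal.Quotient.eq.mpr ?_
      by_cases hi : f i = i
      · rw [hi, sub_self]
        exact J.zero_mem
      · exact Ideal.subset_span ⟨i, hi, rfl⟩
    intro p hp
    refine Ideal.Quotient.eq_zero_iff_mem.mp ((DFunLike.congr_fun hmk p).trans ?_)
    rw [AlgHom.comp_apply, (RingHom.mem_ker.mp hp : rename f p = 0), map_zero]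
  · rw [hJ, Ideal.span_le]
    rintro _ ⟨i, -, rfl⟩
    simp [hf]

theorem height_ker_rename_le [Fintype σ] [DecidableEq σ] {R : Type*} [CommRing R] [IsDomain R]
    [IsNoetherianRing R] {f : σ → σ} (hf : ∀ i, f (f i) = f i) :
    (RingHom.ker (rename (R := R) f)).height ≤ (Finset.univ.filter fun i => f i ≠ i).card := by
  classical
  have hspan : RingHom.ker (rename (R := R) f) = Ideal.span
      (((Finset.univ.filter fun i => f i ≠ i).image fun i => (X i - X (f i) : MvPolynomial σ R) :
        Finset (MvPolynomial σ R)) : Set (MvPolynomial σ R)) := by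
    rw [ker_rename_eq_span hf, Finset.coe_image, Finset.coe_filter_univ]
  have hprime : (RingHom.ker (rename (R := R) f)).IsPrime := RingHom.ker_isPrime _
  have hmin : RingHom.ker (rename (R := R) f) ∈
      (RingHom.ker (rename (R := R) f)).minimalPrimes := by
    rw [Ideal.minimalPrimes_eq_subsingleton_self]
    exact Set.mem_singleton _
  rw [hspan] at hmin ⊢
  exact (Ideal.height_le_card_of_mem_minimalPrimes_span_finset hmin).trans
    (Nat.cast_le.mpr Finset.card_image_le)

theorem homogeneousComponent_mul_of_isHomogeneous {R : Type*} [CommSemiring R] {d : ℕ}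
    (p : MvPolynomial σ R) {q : MvPolynomial σ R} (hq : q.IsHomogeneous d) :
    homogeneousComponent d (p * q) = coeff 0 p • q := by
  classical
  induction p using MvPolynomial.induction_on' with
  | monomial m r =>
    rw [homogeneousComponent_of_mem ((isHomogeneous_monomial r rfl).mul hq), coeff_monomial]
    by_cases hm : m = 0
    · simp [hm, ← C_apply, smul_eq_C_mul]
    · simp [hm, Finsupp.degree_eq_zero_iff]
  | add p₁ p₂ h₁ h₂ => rw [add_mul, map_add, h₁, h₂, coeff_add, add_smul]

theorem le_span_homogeneousComponent {R : Type*} [CommRing R] {d : ℕ}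
    {G s : Set (MvPolynomial σ R)} (hG : ∀ q ∈ G, q.IsHomogeneous d)
    (hs : Ideal.span s = Ideal.span G) :
    Submodule.span R G ≤ Submodule.span R (homogeneousComponent d '' s) := by
  have hmul : ∀ p, ∀ q ∈ Ideal.span G,
      homogeneousComponent d (p * q) = coeff 0 p • homogeneousComponent d q := by
    intro p q hq
    induction hq using Submodule.span_induction generalizing p with
    | mem q hq =>
      rw [homogeneousComponent_mul_of_isHomogeneous p (hG q hq),
        homogeneousComponent_eq_self (hG q hq)]
    | zero => simp
    | add q₁ q₂ _ _ h₁ h₂ => rw [mul_add, map_add, h₁, h₂, map_add, smul_add]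
    | smul a q _ h =>
      rw [smul_eq_mul, ← mul_assoc, h, h, smul_smul, ← constantCoeff_eq, map_mul]
  have hmem : ∀ q ∈ Ideal.span s,
      homogeneousComponent d q ∈ Submodule.span R (homogeneousComponent d '' s) := by
    intro q hq
    induction hq using Submodule.span_induction with
    | mem q hq => exact Submodule.subset_span (Set.mem_image_of_mem _ hq)
    | zero => simp
    | add q₁ q₂ _ _ h₁ h₂ => exact map_add (homogeneousComponent d) q₁ q₂ ▸ add_mem h₁ h₂
    | smul a q hq h =>
      rw [smul_eq_mul, hmul a q (hs ▸ hq)]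
      exact Submodule.smul_mem _ _ h
  refine Submodule.span_le.mpr fun q hq => ?_
  have := hmem q (hs ▸ Ideal.subset_span hq)
  rwa [homogeneousComponent_eq_self (hG q hq)] at this

theorem finrank_span_le_length {d : ℕ} {G : Set (MvPolynomial σ k)}
    (hG : ∀ q ∈ G, q.IsHomogeneous d) {rs : List (MvPolynomial σ k)}
    (hrs : Ideal.span {r | r ∈ rs} = Ideal.span G) :
    Module.finrank k (Submodule.span k G) ≤ rs.length := by
  classical
  obtain ⟨S, hS, hcard⟩ : ∃ S : Finset (MvPolynomial σ k),
      homogeneousComponent d '' {r | r ∈ rs} = S ∧ S.card ≤ rs.length :=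
    ⟨(rs.map (homogeneousComponent d)).toFinset, by ext; simp,
      (List.toFinset_card_le _).trans_eq (List.length_map _)⟩
  have hle : Submodule.span k G ≤ Submodule.span k S := by
    rw [← hS]
    exact le_span_homogeneousComponent hG hrs
  exact (Submodule.finrank_mono hle).trans ((finrank_span_finset_le_card S).trans hcard)

theorem rename_eq_zero_of_rename_swap {R τ : Type*} [CommRing R]
    [IsAddTorsionFree (MvPolynomial τ R)] [DecidableEq σ] {p : MvPolynomial σ R} {x y : σ}
    (hp : rename (Equiv.swap x y) p = -p) {f : σ → τ} (hf : f x = f y) : rename f p = 0 := by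
  have hren := congrArg (rename f) hp
  rw [rename_rename, comp_swap_eq_self hf, map_neg] at hren
  exact self_eq_neg.mp hren

end MvPolynomial

section ColumnPolynomial

variable {k α : Type*} [Field k]

theorem sum_mul_det_updateRow {m R : Type*} [Fintype m] [DecidableEq m] [CommRing R]
    (A : Matrix m m R) (r : m → R) (j : m) :
    ∑ i, A i j * (A.updateRow i r).det = A.det * r j := by
  simpa [Matrix.mulVec, dotProduct, Matrix.cramer_transpose_apply] using
    congrFun (A.transpose.mulVec_cramer r) j

variable (k) in
/-- The Specht polynomial of a single column with entries `t`, listed from top to bottom. -/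
def columnPoly {m : ℕ} (t : Fin m → α) : MvPolynomial α k :=
  ∏ p : Fin m × Fin m with p.1 < p.2, (X (t p.1) - X (t p.2))

theorem columnPoly_eq_det {m : ℕ} (t : Fin m → α) :
    columnPoly k t = (Matrix.vandermonde fun i => (-X (t i) : MvPolynomial α k)).det := by
  simp only [columnPoly, Matrix.det_vandermonde, neg_sub_neg, Finset.prod_filter,
    Fintype.prod_prod_type, ← Finset.filter_lt_eq_Ioi]

theorem isGarnirFamily_columnPoly (m : ℕ) [NeZero m] :
    IsGarnirFamily (fun σ : Equiv.Perm α => (rename σ).toLinearMap)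
      (columnPoly k : (Fin m → α) → MvPolynomial α k) where
  map_perm σ t := by simp [columnPoly]
  comp_swap t i j hij := by
    have hdet := Matrix.det_permute (Equiv.swap i j)
      (Matrix.vandermonde fun i => (-X (t i) : MvPolynomial α k))
    rw [Equiv.Perm.sign_swap hij, Units.val_neg, Units.val_one, Int.cast_neg, Int.cast_one,
      neg_one_mul] at hdet
    rw [columnPoly_eq_det, columnPoly_eq_det, ← hdet]
    rfl
  garnir t x := by
    set A := Matrix.vandermonde fun i => (-X (t i) : MvPolynomial α k) with hA
    have hupdate (i : Fin m) : columnPoly k (Function.update t i x) =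
        A i 0 * (A.updateRow i fun j => (-X x) ^ (j : ℕ)).det := by
      rw [columnPoly_eq_det, hA, Matrix.vandermonde_apply, Fin.val_zero, pow_zero, one_mul]
      congr 1
      ext p q
      obtain rfl | hp := eq_or_ne p i <;> simp [Matrix.vandermonde_apply, *]
    rw [Finset.sum_congr rfl fun i _ => hupdate i, sum_mul_det_updateRow, Fin.val_zero, pow_zero,
      mul_one, columnPoly_eq_det]

/-- The first column of the hook `(a, 1^b)`, listed from top to bottom. -/
def hookColumn {a : ℕ} (ha : 0 < a) (b : ℕ) : Fin (b + 1) ↪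
    Σ i : Fin (a :: List.replicate b 1).length, Fin ((a :: List.replicate b 1).get i) where
  toFun i := ⟨i.cast (by simp), 0, by cases i using Fin.cases <;> simp [ha]⟩
  inj' i j hij := by simpa using congrArg Sigma.fst hij

theorem exists_hookColumn_eq {a b : ℕ} (ha : 0 < a)
    {p : Σ i : Fin (a :: List.replicate b 1).length, Fin ((a :: List.replicate b 1).get i)}
    (hp : (p.2 : ℕ) = 0) : ∃ i, hookColumn ha b i = p := by
  obtain ⟨i, u, hu⟩ := p
  obtain rfl : u = 0 := hp
  exact ⟨i.cast (by simp), rfl⟩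

theorem snd_eq_zero_of_fst_ne_zero {a b : ℕ}
    (p : Σ i : Fin (a :: List.replicate b 1).length, Fin ((a :: List.replicate b 1).get i))
    (hp : p.1 ≠ 0) : (p.2 : ℕ) = 0 := by
  obtain ⟨i, u, hu⟩ := p
  cases i using Fin.cases with
  | zero => exact absurd rfl hp
  | succ i => simpa using hu

theorem spechtPoly_hook {n a b : ℕ} (ha : 0 < a)
    (T : (Σ i : Fin (a :: List.replicate b 1).length,
      Fin ((a :: List.replicate b 1).get i)) ≃ Fin n) :
    spechtPoly k (a :: List.replicate b 1) T = columnPoly k (T ∘ hookColumn ha b) := by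
  symm
  refine Finset.prod_nbij (Prod.map (hookColumn ha b) (hookColumn ha b)) ?_ ?_ ?_ fun _ _ => rfl
  · intro p hp
    exact Finset.mem_filter.mpr ⟨Finset.mem_univ _, rfl, (Finset.mem_filter.mp hp).2⟩
  · exact ((hookColumn ha b).injective.prodMap (hookColumn ha b).injective).injOn
  · rintro ⟨p, q⟩ hpq
    obtain ⟨hrow, hlt⟩ := (Finset.mem_filter.mp hpq).2
    have hq := snd_eq_zero_of_fst_ne_zero q (Fin.ne_zero_of_lt hlt)
    obtain ⟨i, rfl⟩ := exists_hookColumn_eq ha (hrow.trans hq)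
    obtain ⟨j, rfl⟩ := exists_hookColumn_eq ha hq
    exact ⟨(i, j), Finset.mem_coe.mpr (Finset.mem_filter.mpr ⟨Finset.mem_univ _, hlt⟩), rfl⟩

theorem spechtModule_hook [CharZero k] {a b : ℕ} (ha : 0 < a) :
    SpechtModule k (a + b) (a :: List.replicate b 1) =
      Submodule.span k (Set.range (columnPoly k : (Fin (b + 1) → Fin (a + b)) → _)) := by
  refine le_antisymm (Submodule.span_mono ?_) (Submodule.span_le.mpr ?_)
  · rintro _ ⟨T, rfl⟩
    exact ⟨T ∘ hookColumn ha b, (spechtPoly_hook ha T).symm⟩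
  · rintro _ ⟨t, rfl⟩
    by_cases ht : Function.Injective t
    · let T : (Σ i : Fin (a :: List.replicate b 1).length,
          Fin ((a :: List.replicate b 1).get i)) ≃ Fin (a + b) :=
        finSigmaFinEquiv.trans (finCongr (by simp [Fin.sum_univ_succ]))
      obtain ⟨σ, hσ⟩ := Equiv.Perm.exists_extending_pair (T ∘ hookColumn ha b) t
        (T.injective.comp (hookColumn ha b).injective) ht
      refine Submodule.subset_span ⟨T.trans σ, ?_⟩
      rw [spechtPoly_hook ha]
      exact congrArg (columnPoly k) (funext hσ)
    · rw [SetLike.mem_coe, (isGarnirFamily_columnPoly (b + 1)).eq_zero_of_not_injective ht]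
      exact zero_mem _

end ColumnPolynomial

section CompleteIntersection

variable {k : Type*} [Field k] [CharZero k]

theorem rename_eq_zero_of_not_injective {α ι τ : Type*} [Fintype ι] [DecidableEq ι]
    {F : (ι → α) → MvPolynomial α k}
    (hF : IsGarnirFamily (fun σ => (rename σ).toLinearMap) F) {t : ι → α} {f : α → τ}
    (hft : ¬ Function.Injective (f ∘ t)) : rename f (F t) = 0 := by
  classical
  by_cases ht : Function.Injective t
  · obtain ⟨i, j, hij, hne⟩ := Function.not_injective_iff.mp hft
    exact rename_eq_zero_of_rename_swap (hF.map_swap ht hne) hij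
  · rw [hF.eq_zero_of_not_injective ht, map_zero]

theorem length_le_of_isRegular_of_isGarnirFamily {n b : ℕ} (hb : 0 < b) (hbn : b ≤ n)
    {F : (Fin (b + 1) → Fin n) → MvPolynomial (Fin n) k}
    (hF : IsGarnirFamily (fun σ => (rename σ).toLinearMap) F) {rs : List (MvPolynomial (Fin n) k)}
    (hreg : RingTheory.Sequence.IsRegular (MvPolynomial (Fin n) k) rs)
    (hrs : Ideal.span {r | r ∈ rs} = Ideal.span (Set.range F)) : rs.length ≤ n - b := by
  let c : Fin n := ⟨b - 1, by omega⟩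
  let f : Fin n → Fin n := fun i => min i c
  have hninj (t : Fin (b + 1) → Fin n) : ¬ Function.Injective (f ∘ t) := by
    intro hinj
    have hcard : (Finset.univ : Finset (Fin (b + 1))).card ≤ (Finset.Iic c).card :=
      Finset.card_le_card_of_injOn (f ∘ t)
        (fun i _ => Finset.mem_coe.mpr (Finset.mem_Iic.mpr (min_le_right _ _))) hinj.injOn
    rw [Finset.card_fin, Fin.card_Iic] at hcard
    exact absurd hcard (by simp only [c]; omega)
  have hker : Ideal.span (Set.range F) ≤ RingHom.ker (rename (R := k) f) :=
    Ideal.span_le.mpr (Set.range_subset_iff.mpr fun t =>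
      rename_eq_zero_of_not_injective hF (hninj t))
  have hmoved : (Finset.univ.filter fun i => f i ≠ i).card = n - b := by
    have hIoi : (Finset.univ.filter fun i => f i ≠ i) = Finset.Ioi c := by ext; simp [f]
    rw [hIoi, Fin.card_Ioi]
    simp only [c]
    omega
  have hprime : (RingHom.ker (rename (R := k) f)).IsPrime := RingHom.ker_isPrime _
  have hheight := (length_le_height_of_isRegular hreg fun r hr =>
    hker (hrs ▸ Ideal.subset_span hr)).trans (height_ker_rename_le fun i => by simp [f])
  rwa [hmoved, Nat.cast_le] at hheight

theorem not_isCompleteIntersection_of_isGarnirFamily {n b d : ℕ} (hb : 2 ≤ b) (hbn : b + 2 ≤ n)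
    {F : (Fin (b + 1) → Fin n) → MvPolynomial (Fin n) k}
    (hF : IsGarnirFamily (fun σ => (rename σ).toLinearMap) F) (hd : ∀ t, (F t).IsHomogeneous d)
    (hne : F ≠ 0) : ¬ IsCompleteIntersection (Ideal.span (Set.range F)) := by
  rintro ⟨rs, hreg, hrs⟩
  have hupper : rs.length ≤ n - b :=
    length_le_of_isRegular_of_isGarnirFamily (by omega) (by omega) hF hreg hrs
  have hlower : (n - 1).choose b ≤ rs.length := by
    simpa only [Fintype.card_fin] using (hF.choose_le_finrank_span hne).trans
      (finrank_span_le_length (Set.forall_mem_range.mpr hd) hrs)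
  have hchoose : n - 1 ≤ (n - 1).choose b := self_le_choose (by omega) (by omega)
  omega

end CompleteIntersection

/-- Let `λ = (a,1^b)` be a hook partition of `n` containing
`(2,1,1)` (i.e. `a ≥ 2` and `b ≥ 2`).  If `φ : S^λ → R_d` is a nonzero
`S_n`-equivariant map and `I` is the ideal generated by the image of `φ`, then
`I` is not a complete intersection. -/
theorem stmt3 {k : Type*} [Field k] [CharZero k] {n : ℕ}
    (l : List ℕ) (hsum : l.sum = n)
    -- `λ = (a, 1^b)` is a hook containing `(2,1,1)`, i.e. `a ≥ 2`, `b ≥ 2`: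
    (hhook : ∃ a b : ℕ, l = a :: List.replicate b 1 ∧ 2 ≤ a ∧ 2 ≤ b)
    (d : ℕ)
    (φ : ↥(SpechtModule k n l) →ₗ[k] MvPolynomial (Fin n) k)
    (hφd : ∀ v, φ v ∈ homogeneousSubmodule (Fin n) k d)
    -- `φ` is `S_n`-equivariant:
    (hφeq : ∀ (σ : Equiv.Perm (Fin n)) (v w : SpechtModule k n l),
      (w : MvPolynomial (Fin n) k) = rename (⇑σ) (v : MvPolynomial (Fin n) k) →
      φ w = rename (⇑σ) (φ v))
    (hφ : φ ≠ 0) :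
    ¬ IsCompleteIntersection (Ideal.span (Set.range φ)) := by
  obtain ⟨a, b, rfl, ha, hb⟩ := hhook
  obtain rfl : n = a + b := by simpa using hsum.symm
  have hspan := spechtModule_hook (k := k) (b := b) (two_pos.trans_le ha)
  have hmem (t : Fin (b + 1) → Fin (a + b)) :
      columnPoly k t ∈ SpechtModule k (a + b) (a :: List.replicate b 1) :=
    hspan ▸ Submodule.subset_span (Set.mem_range_self t)
  have hF := (isGarnirFamily_columnPoly (b + 1)).map hmem
    (ρ' := fun σ => (rename σ).toLinearMap) φ hφeq
  have hrange := range_eq_span_range_apply hmem hspan.le φ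
  have hne : (fun t => φ ⟨columnPoly k t, hmem t⟩) ≠ 0 := by
    intro hzero
    refine hφ (LinearMap.range_eq_bot.mp (hrange.trans ?_))
    rw [hzero, Submodule.span_eq_bot]
    exact Set.forall_mem_range.mpr fun _ => rfl
  rw [← LinearMap.coe_range, hrange, Ideal.span, Submodule.span_span_of_tower]
  exact not_isCompleteIntersection_of_isGarnirFamily hb (by omega) hF (fun t => hφd _) hne

end
end

section
/- If I ⊆ R = k[x_1,...,x_n] is an S_n-stable complete intersection ideal, then I/mI is isomorphic as an S_n-representation to one of: (I) a direct sum of m trivial representations S^{(n)} with 1 ≤ m ≤ n; (II) one alternating representation S^{(1^n)} plus at most n-1 trivials; (III) one standard representation S^{(n-1,1)} plus at most one trivial; or (IV) for n = 4 only, one copy of S^{(2,2)} plus at most two trivials. -/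
open MvPolynomial

noncomputable section

/-- A subspace of `k[x_1,…,x_n]` is `S_n`-stable if it is closed under
permutations of the variables. -/
def Stable {k : Type*} [Field k] {n : ℕ}
    (W : Submodule k (MvPolynomial (Fin n) k)) : Prop :=
  ∀ σ : Equiv.Perm (Fin n), ∀ p ∈ W, rename (⇑σ) p ∈ W

/-- Two subspaces of `k[x_1,…,x_n]` are equivariantly isomorphic if there is a
`k`-linear isomorphism between them commuting with the `S_n`-action. -/
def EqIso {k : Type*} [Field k] {n : ℕ}
    (W U : Submodule k (MvPolynomial (Fin n) k)) : Prop :=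
  ∃ e : W ≃ₗ[k] U, ∀ (σ : Equiv.Perm (Fin n)) (v w : W),
    (w : MvPolynomial (Fin n) k) = rename (⇑σ) (v : MvPolynomial (Fin n) k) →
    ((e w : MvPolynomial (Fin n) k) = rename (⇑σ) (e v : MvPolynomial (Fin n) k))

/-- The Specht module of the hook partition `(n-u, 1^u)`, realized inside
`k[x_1,…,x_n]` as the span of the Specht polynomials (Vandermonde
determinants on `u+1` of the variables).  For `u = 1` this is the standard
representation `S^{(n-1,1)}`. -/
def HookModule (k : Type*) [Field k] (n u : ℕ) : Submodule k (MvPolynomial (Fin n) k) :=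
  Submodule.span k
    (Set.range fun a : Fin (u + 1) ↪ Fin n =>
      ∏ p ∈ Finset.univ.filter (fun p : Fin (u + 1) × Fin (u + 1) => p.1 < p.2),
        (X (a p.1) - X (a p.2)))

/-! The proof rests on how a transposition `s = (i j)` acts on `V`. By the graded Nakayama lemma `V`
generates `I`, so `dim V` is at most the height of `I`. Every `s p - p` is divisible by
`α = X i - X j`, so `I` is contained in the ideal generated by the `s`-fixed part of `V` together
with `α`; as `dim V ≤ height I`, Krull's height theorem leaves at most one dimension for the image
of `s - 1` on `V`. Hence transpositions act on `V` as reflections or trivially.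

Write `L i j` for the image of `(i j) - 1`. The sum of these lines is the kernel of `V` onto its
coinvariants, a complement of the invariants. If two lines `L i j`, `L i l` meet, all lines agree
and the sum is the sign representation. Otherwise take `a ≠ 0` in `L p q`. If `a` is fixed by all
permutations fixing `p` and `q`, summing the translates of `a` yields a permuted family of vectors,
whose differences span a standard representation. If not, `L p q = L i j` for some `i, j` distinct
from `p, q`, and comparing with `L i m` rules out a fifth letter `m`. The bound on the number of
trivial summands is `dim V ≤ n`.
-/

section RegularSequence

variable {A : Type*} [CommRing A]

theorem length_le_height_of_isWeaklyRegular {rs : List A}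
    (h : RingTheory.Sequence.IsWeaklyRegular A rs) :
    (rs.length : ℕ∞) ≤ (Ideal.ofList rs).height := by
  induction rs using List.reverseRecOn with
  | nil => simp
  | append_singleton rs r ih =>
    rw [RingTheory.Sequence.isWeaklyRegular_append_iff,
      RingTheory.Sequence.isWeaklyRegular_singleton_iff] at h
    obtain ⟨hrs, hr⟩ := h
    rw [Ideal.height_eq_inf_minimalPrimes]
    refine le_iInf₂ fun P hP => ?_
    have := hP.isPrime
    have hrP : r ∈ P := hP.le (Ideal.subset_span (by simp))
    obtain ⟨Q, hQ, hQP⟩ : ∃ Q ∈ (Ideal.ofList rs).minimalPrimes, Q ≤ P :=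
      Ideal.exists_minimalPrimes_le (le_trans (by simp [Ideal.ofList_append]) hP.le)
    have := hQ.isPrime
    have hrQ : r ∉ Q := hr.notMem_of_mem_minimalPrimes <| by
      rwa [smul_eq_mul, Ideal.mul_top, Ideal.annihilator_quotient]
    calc ((rs ++ [r]).length : ℕ∞) = rs.length + 1 := by simp
      _ ≤ Q.height + 1 := by gcongr; exact (ih hrs).trans (Ideal.height_mono hQ.le)
      _ ≤ P.height := Ideal.height_add_one_le_of_lt_of_isPrime
        (lt_of_le_of_ne hQP (ne_of_mem_of_not_mem' hrP hrQ).symm)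

end RegularSequence

section MinimalGenerators

theorem le_sup_pow_of_le_sup_mul {A : Type*} [CommSemiring A] {I J m : Ideal A}
    (h : I ≤ J ⊔ m * I) (d : ℕ) : I ≤ J ⊔ m ^ d := by
  induction d with
  | zero => simp
  | succ d ih =>
    calc I ≤ J ⊔ m * (J ⊔ m ^ d) := h.trans (sup_le_sup_left (Ideal.mul_mono_right ih) J)
      _ = (J ⊔ m * J) ⊔ m ^ (d + 1) := by rw [Ideal.mul_sup, pow_succ', sup_assoc]
      _ = J ⊔ m ^ (d + 1) := by rw [sup_eq_left.2 (Ideal.mul_le_right : m * J ≤ J)]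

variable {σ R : Type*} [CommRing R]

theorem homogeneousComponent_mem_span {s : Set (MvPolynomial σ R)}
    (hs : ∀ p ∈ s, ∀ d, homogeneousComponent d p ∈ s) {p : MvPolynomial σ R}
    (hp : p ∈ Ideal.span s) (d : ℕ) : homogeneousComponent d p ∈ Ideal.span s := by
  let _ := gradedAlgebra (σ := σ) (R := R)
  set t := {q ∈ s | ∃ e, q.IsHomogeneous e}
  have hst : Ideal.span s = Ideal.span t := by
    refine le_antisymm (Ideal.span_le.2 fun q hq => ?_) (Ideal.span_mono (Set.sep_subset _ _))
    rw [SetLike.mem_coe, ← sum_homogeneousComponent q]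
    exact sum_mem fun e _ =>
      Ideal.subset_span ⟨hs q hq e, e, homogeneousComponent_isHomogeneous e q⟩
  rw [hst] at hp ⊢
  refine homogeneousComponent_mem_of_mem (Ideal.homogeneous_span _ t ?_) hp d
  rintro q ⟨-, e, he⟩
  exact ⟨e, he⟩

theorem homogeneousComponent_eq_zero_of_mem_pow_idealOfVars {d e : ℕ} (hed : e < d)
    {p : MvPolynomial σ R} (hp : p ∈ idealOfVars σ R ^ d) : homogeneousComponent e p = 0 := by
  ext m
  rw [coeff_homogeneousComponent, coeff_zero]
  split_ifs with hm
  · exact (mem_pow_idealOfVars_iff' d p).1 hp m (hm ▸ hed)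
  · rfl

theorem span_eq_of_le_sup_idealOfVars_mul {s : Set (MvPolynomial σ R)}
    (hs : ∀ p ∈ s, ∀ d, homogeneousComponent d p ∈ s) {I : Ideal (MvPolynomial σ R)}
    (hsI : s ⊆ I) (hI : I ≤ Ideal.span s ⊔ idealOfVars σ R * I) : Ideal.span s = I := by
  refine le_antisymm (Ideal.span_le.2 hsI) fun p hp => ?_
  rw [← sum_homogeneousComponent p]
  refine sum_mem fun d _ => ?_
  obtain ⟨q, hq, r, hr, rfl⟩ := Submodule.mem_sup.1 (le_sup_pow_of_le_sup_mul hI (d + 1) hp)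
  rw [map_add, homogeneousComponent_eq_zero_of_mem_pow_idealOfVars d.lt_succ_self hr, add_zero]
  exact homogeneousComponent_mem_span hs hq d

theorem span_eq_of_sup_idealOfVars_mul_eq {V : Submodule R (MvPolynomial σ R)}
    (hV : ∀ p ∈ V, ∀ d, homogeneousComponent d p ∈ V) {I : Ideal (MvPolynomial σ R)}
    (hI : V ⊔ (idealOfVars σ R * I).restrictScalars R = I.restrictScalars R) :
    Ideal.span (V : Set (MvPolynomial σ R)) = I := by
  refine span_eq_of_le_sup_idealOfVars_mul hV
    (fun p hp => hI.le (Submodule.mem_sup_left hp)) fun p hp => ?_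
  obtain ⟨v, hv, q, hq, rfl⟩ := Submodule.mem_sup.1 (hI.ge hp)
  exact Submodule.add_mem_sup (Ideal.subset_span hv) hq

theorem sub_C_constantCoeff_mem_idealOfVars (p : MvPolynomial σ R) :
    p - C (constantCoeff p) ∈ idealOfVars σ R := by
  rw [← pow_one (idealOfVars σ R), mem_pow_idealOfVars_iff']
  intro m hm
  rw [Nat.lt_one_iff, Finsupp.degree_eq_zero_iff] at hm
  simp [hm, constantCoeff_eq]

theorem span_le_span_sup_idealOfVars_mul (s : Set (MvPolynomial σ R)) :
    (Ideal.span s).restrictScalars R ≤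
      Submodule.span R s ⊔ (idealOfVars σ R * Ideal.span s).restrictScalars R := by
  intro p hp
  induction hp using Submodule.span_induction with
  | mem p hp => exact Submodule.mem_sup_left (Submodule.subset_span hp)
  | zero => exact zero_mem _
  | add p q _ _ hp hq => exact add_mem hp hq
  | smul a p hp ih =>
    have hsplit : a • p = constantCoeff a • p + (a - C (constantCoeff a)) * p := by
      rw [smul_eq_mul, smul_eq_C_mul]; ring
    rw [hsplit]
    exact add_mem (Submodule.smul_mem _ _ ih)
      (Submodule.mem_sup_right (Ideal.mul_mem_mul (sub_C_constantCoeff_mem_idealOfVars a) hp))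

theorem constantCoeff_eq_zero_of_mem {k : Type*} [Field k] {I : Ideal (MvPolynomial σ k)}
    (hI : I ≠ ⊤) {V : Submodule k (MvPolynomial σ k)} (hVI : V ≤ I.restrictScalars k)
    (hV : ∀ p ∈ V, ∀ d, homogeneousComponent d p ∈ V) {p : MvPolynomial σ k} (hp : p ∈ V) :
    constantCoeff p = 0 := by
  by_contra h
  have hC := hVI (hV p hp 0)
  rw [homogeneousComponent_zero, ← constantCoeff_eq] at hC
  exact hI (I.eq_top_of_isUnit_mem hC ((IsUnit.mk0 _ h).map C))

end MinimalGenerators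

section Height

variable {k M : Type*} [Field k] [AddCommGroup M] [Module k M]

theorem finiteDimensional_and_finrank_le_of_le_sup {U V W : Submodule k M} [FiniteDimensional k U]
    (hdisj : Disjoint V W) (hle : V ≤ U ⊔ W) :
    FiniteDimensional k V ∧ Module.finrank k V ≤ Module.finrank k U := by
  have hinj : Function.Injective (W.mkQ.domRestrict V) := by
    rw [← LinearMap.ker_eq_bot, LinearMap.ker_eq_bot']
    intro v hv
    exact Subtype.ext
      (Submodule.disjoint_def.1 hdisj v v.2 ((Submodule.Quotient.mk_eq_zero W).1 hv))
  have hmap : V.map W.mkQ ≤ U.map W.mkQ := by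
    simpa [Submodule.map_sup] using Submodule.map_mono (f := W.mkQ) hle
  rw [← LinearMap.range_domRestrict] at hmap
  have : FiniteDimensional k (LinearMap.range (W.mkQ.domRestrict V)) :=
    Submodule.finiteDimensional_of_le hmap
  refine ⟨.of_injective (W.mkQ.domRestrict V).rangeRestrict fun _ _ h =>
    hinj (congrArg Subtype.val h), ?_⟩
  calc Module.finrank k V = Module.finrank k (LinearMap.range (W.mkQ.domRestrict V)) :=
        (LinearMap.finrank_range_of_inj hinj).symm
    _ ≤ Module.finrank k (U.map W.mkQ) := Submodule.finrank_mono hmap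
    _ ≤ Module.finrank k U := Submodule.finrank_map_le W.mkQ U

variable {A : Type*} [CommRing A] [IsNoetherianRing A] [Algebra k A]

theorem height_span_le_finrank (U : Submodule k A) [FiniteDimensional k U]
    (hU : Ideal.span (U : Set A) ≠ ⊤) :
    (Ideal.span (U : Set A)).height ≤ Module.finrank k U := by
  let b := Module.finBasis k U
  have hspan : Ideal.span (Set.range fun i => (b i : A)) = Ideal.span U := by
    have hb : Submodule.span k (Set.range fun i => (b i : A)) = U := by
      exact (Set.range_comp U.subtype b ▸ (Submodule.map_span U.subtype _).symm).trans (by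
        rw [b.span_eq, Submodule.map_subtype_top])
    rw [Ideal.span, ← Submodule.span_span_of_tower k A, hb]
  rw [← hspan] at hU ⊢
  calc (Ideal.span (Set.range fun i => (b i : A))).height
      ≤ (Set.range fun i => (b i : A)).encard :=
        (Ideal.height_le_spanFinrank _ hU).trans (Submodule.spanFinrank_span_le_encard _)
    _ ≤ Module.finrank k U := by
      rw [← Set.image_univ]
      exact (Set.encard_image_le _ _).trans (by simp)

theorem isPrincipal_range_sub_one_of_dvd [NeZero (2 : k)] [FiniteDimensional k M] (φ : M →ₗ[k] A)
    {s : Module.End k M} (hs : s * s = 1) {α : A} (hα : ∀ v, α ∣ φ (s v - v))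
    (hφ : Module.finrank k M ≤ (Ideal.span (Set.range φ)).height)
    (htop : Ideal.span (Set.range φ) ⊔ Ideal.span {α} ≠ ⊤) :
    (LinearMap.range (s - 1)).IsPrincipal := by
  set U := (LinearMap.ker (s - 1)).map φ ⊔ Submodule.span k {α}
  have hαU : α ∈ Ideal.span (U : Set A) :=
    Ideal.subset_span (Submodule.mem_sup_right (Submodule.mem_span_singleton_self α))
  have hφU : Ideal.span (Set.range φ) ≤ Ideal.span (U : Set A) := by
    rw [Ideal.span_le]
    rintro _ ⟨v, rfl⟩
    have hss : s (s v) = v := LinearMap.congr_fun hs v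
    have hker : s v + v ∈ LinearMap.ker (s - 1) := by simp [hss, add_comm]
    have hsplit : φ v = (2⁻¹ : k) • (φ (s v + v) - φ (s v - v)) := by
      rw [← map_sub, add_sub_sub_cancel, ← two_smul k, map_smul, inv_smul_smul₀ (NeZero.ne 2)]
    rw [SetLike.mem_coe, hsplit]
    exact Submodule.smul_of_tower_mem _ _ (sub_mem
      (Ideal.subset_span (Submodule.mem_sup_left (Submodule.mem_map_of_mem hker)))
      (Ideal.mem_of_dvd _ (hα v) hαU))
  have hUtop : Ideal.span (U : Set A) ≠ ⊤ := by
    refine ne_top_of_le_ne_top htop (Ideal.span_le.2 fun x hx => ?_)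
    obtain ⟨_, ⟨v, -, rfl⟩, z, hz, rfl⟩ := Submodule.mem_sup.1 hx
    exact Submodule.add_mem_sup (Ideal.subset_span ⟨v, rfl⟩)
      (Submodule.span_le_restrictScalars k A _ hz)
  have hfinrank : Module.finrank k M ≤ Module.finrank k U :=
    mod_cast hφ.trans ((Ideal.height_mono hφU).trans (height_span_le_finrank U hUtop))
  have hU : Module.finrank k U ≤ Module.finrank k (LinearMap.ker (s - 1)) + 1 :=
    (Submodule.finrank_add_le_finrank_add_finrank _ _).trans
      (add_le_add (Submodule.finrank_map_le _ _)
        ((Submodule.finrank_le_one_iff_isPrincipal _).2 ⟨α, rfl⟩))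
  have hrank := LinearMap.finrank_range_add_finrank_ker (s - 1)
  rw [← Submodule.finrank_le_one_iff_isPrincipal]
  omega

theorem height_le_card_of_ne_top {σ : Type*} [Finite σ]
    {I : Ideal (MvPolynomial σ k)} (hI : I ≠ ⊤) : I.height ≤ Nat.card σ := by
  have := Ideal.height_le_ringKrullDim_of_ne_top hI
  rw [MvPolynomial.ringKrullDim_of_isNoetherianRing, ringKrullDim_eq_zero_of_field,
    zero_add] at this
  exact_mod_cast this

end Height

section Representation

open Equiv (swap Perm)
open Representation (Coinvariants.ker Coinvariants.sub_mem_ker)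

variable {k V : Type*} [Field k] [AddCommGroup V] [Module k V]

section Group

variable {G : Type*} [Group G] (ρ : Representation k G V)

/-- The moved space of a group element `g`, i.e. the image of `g - 1`, in the terminology of
reflection groups: `g` acts as a reflection exactly when this is a line. -/
def movedSpace (g : G) : Submodule k V :=
  LinearMap.range (ρ g - 1)

variable {ρ} {g h : G} {x : V}

theorem apply_sub_mem_movedSpace (g : G) (x : V) : ρ g x - x ∈ movedSpace ρ g :=
  ⟨x, rfl⟩

theorem apply_ne_zero (g : G) (hx : x ≠ 0) : ρ g x ≠ 0 :=
  (map_ne_zero_iff _ (ρ.apply_bijective g).1).2 hx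

theorem mem_movedSpace_iff_of_mul_self [NeZero (2 : k)] (hg : g * g = 1) :
    x ∈ movedSpace ρ g ↔ ρ g x = -x := by
  constructor
  · rintro ⟨v, rfl⟩
    have hgg : ρ g (ρ g v) = v := by rw [← Module.End.mul_apply, ← map_mul, hg, map_one]; rfl
    simp [hgg]
  · intro hx
    have h2 : (2 : k) ≠ 0 := NeZero.ne 2
    have hx2 : x = (-2⁻¹ : k) • (ρ g x - x) := by
      rw [hx, ← neg_add', ← two_smul k x, neg_smul_neg, inv_smul_smul₀ h2]
    rw [hx2]
    exact Submodule.smul_mem _ _ (apply_sub_mem_movedSpace g x)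

theorem apply_mem_movedSpace_conj (h : G) (hx : x ∈ movedSpace ρ g) :
    ρ h x ∈ movedSpace ρ (h * g * h⁻¹) := by
  obtain ⟨v, rfl⟩ := hx
  exact ⟨ρ h v, by simp [← Module.End.mul_apply, ← map_mul]⟩

theorem movedSpace_mul_le : movedSpace ρ (g * h) ≤ movedSpace ρ g ⊔ movedSpace ρ h := by
  rintro _ ⟨v, rfl⟩
  have hsplit : (ρ (g * h) - 1) v = (ρ g (ρ h v) - ρ h v) + (ρ h v - v) := by simp
  rw [hsplit]
  exact Submodule.add_mem_sup (apply_sub_mem_movedSpace g _) (apply_sub_mem_movedSpace h v)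

theorem movedSpace_le_coinvariantsKer (g : G) : movedSpace ρ g ≤ Coinvariants.ker ρ := by
  rintro _ ⟨v, rfl⟩
  exact Coinvariants.sub_mem_ker g v

theorem apply_mem_coinvariantsKer (g : G) (hx : x ∈ Coinvariants.ker ρ) :
    ρ g x ∈ Coinvariants.ker ρ := by
  simpa using add_mem (Coinvariants.sub_mem_ker g x) hx

variable (ρ) in
theorem isCompl_coinvariantsKer_invariants [Fintype G] [NeZero (Fintype.card G : k)] :
    IsCompl (Coinvariants.ker ρ) ρ.invariants := by
  have : Invertible (Fintype.card G : k) := invertibleOfNonzero (NeZero.ne _)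
  suffices hker : LinearMap.ker ρ.averageMap = Coinvariants.ker ρ by
    rw [← hker]
    exact ρ.isProj_averageMap.isCompl.symm
  apply le_antisymm
  · intro v hv
    have hv0 : (⅟(Fintype.card G : k)) • ∑ g : G, ρ g v = 0 := by
      simpa [Representation.averageMap, GroupAlgebra.average] using hv
    have hv' : v = -(⅟(Fintype.card G : k)) • ∑ g : G, (ρ g v - v) := by
      rw [Finset.sum_sub_distrib, smul_sub, neg_smul, hv0]
      simp [← Nat.cast_smul_eq_nsmul k, NeZero.ne (Fintype.card G : k)]
    rw [hv']
    exact Submodule.smul_mem _ _ (sum_mem fun g _ => Coinvariants.sub_mem_ker g v)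
  · refine Submodule.span_le.2 ?_
    rintro _ ⟨⟨g, v⟩, rfl⟩
    rw [SetLike.mem_coe, LinearMap.mem_ker, map_sub, sub_eq_zero, Representation.averageMap,
      ← Representation.asAlgebraHom_single_one, ← Module.End.mul_apply, ← map_mul,
      GroupAlgebra.mul_average_right]

end Group

section Perm

variable {ι : Type*} [DecidableEq ι] {ρ : Representation k (Perm ι) V} {a : V} {i j l p q : ι}

theorem apply_swap_apply_swap (i j : ι) (a : V) : ρ (swap i j) (ρ (swap i j) a) = a := by
  rw [← Module.End.mul_apply, ← map_mul, Equiv.swap_mul_self, map_one]; rfl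

theorem movedSpace_swap_comm (i j : ι) : movedSpace ρ (swap i j) = movedSpace ρ (swap j i) := by
  rw [Equiv.swap_comm]

theorem movedSpace_swap_self (i : ι) : movedSpace ρ (swap i i) = ⊥ := by
  simp [movedSpace, ← Equiv.Perm.one_def]

theorem ne_of_mem_movedSpace_swap (ha : a ∈ movedSpace ρ (swap i j)) (ha0 : a ≠ 0) : i ≠ j := by
  rintro rfl
  rw [movedSpace_swap_self] at ha
  exact ha0 ((Submodule.mem_bot k).1 ha)

theorem mem_movedSpace_swap_iff [NeZero (2 : k)] :
    a ∈ movedSpace ρ (swap i j) ↔ ρ (swap i j) a = -a :=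
  mem_movedSpace_iff_of_mul_self (Equiv.swap_mul_self i j)

theorem apply_mem_movedSpace_swap (σ : Perm ι) (ha : a ∈ movedSpace ρ (swap i j)) :
    ρ σ a ∈ movedSpace ρ (swap (σ i) (σ j)) := by
  rw [Equiv.swap_apply_apply]
  exact apply_mem_movedSpace_conj σ ha

theorem apply_mem_movedSpace_swap' {σ : Perm ι} (ha : a ∈ movedSpace ρ (swap i j)) (hi : σ i = p)
    (hj : σ j = q) : ρ σ a ∈ movedSpace ρ (swap p q) :=
  hi ▸ hj ▸ apply_mem_movedSpace_swap σ ha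

theorem movedSpace_swap_le_sup (hil : i ≠ l) (hjl : j ≠ l) :
    movedSpace ρ (swap j l) ≤ movedSpace ρ (swap i j) ⊔ movedSpace ρ (swap i l) := by
  rw [← Equiv.swap_mul_swap_mul_swap hil.symm hjl.symm, Equiv.swap_comm l i]
  exact movedSpace_mul_le.trans (sup_le (movedSpace_mul_le) le_sup_left)

theorem neZero_natCast_of_le_card {ι : Type*} [DecidableEq ι] [Fintype ι]
    [NeZero (Fintype.card (Perm ι) : k)] {m : ℕ} (hm : 0 < m) (hle : m ≤ Fintype.card ι) :
    NeZero (m : k) := by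
  refine ⟨fun h => NeZero.ne (Fintype.card (Perm ι) : k) ?_⟩
  obtain ⟨c, hc⟩ := Nat.dvd_factorial hm hle
  rw [Fintype.card_perm, hc, Nat.cast_mul, h, zero_mul]

theorem exists_perm_apply_eq {ι : Type*} {i j p q : ι} (hij : i ≠ j) (hpq : p ≠ q) :
    ∃ σ : Perm ι, σ i = p ∧ σ j = q :=
  MulAction.is_two_pretransitive_iff.1 (Equiv.Perm.isMultiplyPretransitive ι 2) hij hpq

theorem coinvariantsKer_eq_iSup_movedSpace [Finite ι] :
    Coinvariants.ker ρ = ⨆ i, ⨆ j, movedSpace ρ (swap i j) := by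
  refine le_antisymm (Submodule.span_le.2 ?_)
    (iSup₂_le fun i j => movedSpace_le_coinvariantsKer _)
  rintro _ ⟨⟨σ, v⟩, rfl⟩
  suffices h : movedSpace ρ σ ≤ ⨆ i, ⨆ j, movedSpace ρ (swap i j) from
    h (apply_sub_mem_movedSpace σ v)
  induction σ using Equiv.Perm.swap_induction_on with
  | one => simp [movedSpace]
  | swap_mul τ i j _ ih =>
    exact movedSpace_mul_le.trans
      (sup_le (le_iSup₂ (f := fun i j => movedSpace ρ (swap i j)) i j) ih)

theorem coinvariantsKer_eq_iSup_movedSpace_swap [Finite ι] (i : ι) :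
    Coinvariants.ker ρ = ⨆ j, movedSpace ρ (swap i j) := by
  rw [coinvariantsKer_eq_iSup_movedSpace]
  refine le_antisymm (iSup₂_le fun j l => ?_) (le_iSup (fun i => ⨆ j, movedSpace ρ (swap i j)) i)
  have hle : ∀ j, movedSpace ρ (swap i j) ≤ ⨆ j, movedSpace ρ (swap i j) := le_iSup _
  obtain rfl | - := eq_or_ne i j
  · exact hle l
  obtain rfl | hil := eq_or_ne i l
  · exact (movedSpace_swap_comm j i).trans_le (hle j)
  obtain rfl | hjl := eq_or_ne j l
  · exact (movedSpace_swap_self j).trans_le bot_le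
  · exact (movedSpace_swap_le_sup hil hjl).trans (sup_le (hle j) (hle l))

theorem mem_invariants_of_swap [Finite ι] (h : ∀ i j, ρ (swap i j) a = a) : a ∈ ρ.invariants := by
  intro σ
  induction σ using Equiv.Perm.swap_induction_on with
  | one => simp
  | swap_mul τ i j _ ih => rw [map_mul, Module.End.mul_apply, ih, h]

theorem apply_eq_sign_smul_of_swap [Fintype ι] (h : ∀ i j, i ≠ j → ρ (swap i j) a = -a)
    (σ : Perm ι) :
    ρ σ a = ((Equiv.Perm.sign σ : ℤ) : k) • a := by
  induction σ using Equiv.Perm.swap_induction_on with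
  | one => simp
  | swap_mul τ i j hij ih =>
    simp [ih, h i j hij, Equiv.Perm.sign_swap hij]

theorem apply_eq_self_of_swap [Finite ι] {s : Set ι}
    (h : ∀ i ∈ s, ∀ j ∈ s, i ≠ j → ρ (swap i j) a = a)
    {σ : Perm ι} (hσ : ∀ i ∉ s, σ i = i) : ρ σ a = a := by
  classical
  suffices hs : ∀ τ : Perm s, ρ (Equiv.Perm.ofSubtype τ) a = a by
    have hiff : ∀ i, σ i ∈ s ↔ i ∈ s := fun i => not_iff_not.1
      ⟨fun hi => by rwa [σ.injective (hσ _ hi)] at hi, fun hi => by rwa [hσ i hi]⟩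
    have hσa := hs (σ.subtypePerm hiff)
    rwa [Equiv.Perm.ofSubtype_subtypePerm hiff fun i hi => not_imp_comm.1 (hσ i) hi] at hσa
  intro τ
  induction τ using Equiv.Perm.swap_induction_on with
  | one => simp
  | swap_mul τ i j hij ih =>
    rw [map_mul, map_mul, Module.End.mul_apply, ih, Equiv.Perm.ofSubtype_swap_eq]
    exact h _ i.2 _ j.2 (Subtype.coe_injective.ne hij)

theorem apply_sum_swap_of_fixed [Fintype ι] (hpq : p ≠ q)
    (ha : ∀ σ : Perm ι, σ p = p → σ q = q → ρ σ a = a) {σ : Perm ι} (hσ : σ p = p) :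
    ρ σ (∑ j ∈ Finset.univ.erase p, ρ (swap q j) a) =
      ∑ j ∈ Finset.univ.erase p, ρ (swap q j) a := by
  have hσp : ∀ {j}, σ j = p ↔ j = p := fun {j} => by rw [← hσ, σ.injective.eq_iff, hσ]
  rw [map_sum]
  refine Finset.sum_equiv σ (fun j => by simp [hσp]) fun j hj => ?_
  have hjp := Finset.ne_of_mem_erase hj
  have hfix : ρ (swap q (σ j) * (σ * swap q j)) a = a := by
    apply ha
    · simp only [Equiv.Perm.mul_apply, Equiv.swap_apply_of_ne_of_ne hpq hjp.symm, hσ,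
        Equiv.swap_apply_of_ne_of_ne hpq (fun h => hjp (hσp.1 h.symm))]
    · simp
  rw [map_mul, map_mul, Module.End.mul_apply, Module.End.mul_apply] at hfix
  rw [← apply_swap_apply_swap (ρ := ρ) q (σ j) (ρ σ _), hfix]

theorem apply_apply_swap_of_fixed (ha : ∀ σ : Perm ι, σ p = p → ρ σ a = a) (σ : Perm ι) (i : ι) :
    ρ σ (ρ (swap p i) a) = ρ (swap p (σ i)) a := by
  have hfix := ha (swap p (σ i) * (σ * swap p i)) (by simp)
  rw [map_mul, map_mul, Module.End.mul_apply, Module.End.mul_apply] at hfix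
  rw [← apply_swap_apply_swap (ρ := ρ) p (σ i) (ρ σ _), hfix]

theorem injective_of_equivariant {ι : Type*} {ρ : Representation k (Perm ι) V} {f : ι → V}
    (hf : ∀ σ i, ρ σ (f i) = f (σ i)) {p q : ι} (hpq : p ≠ q) (hfpq : f p ≠ f q) :
    Function.Injective f := by
  intro i j hfij
  by_contra hij
  obtain ⟨σ, rfl, rfl⟩ := exists_perm_apply_eq hij hpq
  exact hfpq ((hf σ i).symm.trans (hfij ▸ hf σ j))

theorem affineIndependent_of_equivariant {ι : Type*} [Fintype ι] [NeZero (Fintype.card ι : k)]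
    {ρ : Representation k (Perm ι) V} {f : ι → V} (hf : ∀ σ i, ρ σ (f i) = f (σ i))
    (hinj : Function.Injective f) : AffineIndependent k f := by
  classical
  rw [affineIndependent_iff_of_fintype]
  intro c hc hcf
  rw [Finset.weightedVSub_eq_linear_combination _ hc] at hcf
  have hconst : ∀ i j, c i = c j := fun i j => by
    obtain rfl | hij := eq_or_ne i j
    · rfl
    have hswap : ∑ l, c (swap i j l) • f l = 0 := by
      rw [← map_zero (ρ (swap i j)), ← hcf, map_sum]
      exact (Fintype.sum_equiv (swap i j) _ _ fun l => by simp [hf]).symm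
    -- Only the coefficients of `f i` and `f j` change: `(c j - c i) • (f i - f j) = 0`.
    have hdiff : ∑ l, (c (swap i j l) - c l) • f l = 0 := by
      simp only [sub_smul, Finset.sum_sub_distrib, hswap, hcf, sub_zero]
    rw [Fintype.sum_eq_add i j hij fun l hl => by
      rw [Equiv.swap_apply_of_ne_of_ne hl.1 hl.2, sub_self, zero_smul], Equiv.swap_apply_left,
      Equiv.swap_apply_right, ← neg_sub (c j), neg_smul, ← sub_eq_add_neg, ← smul_sub] at hdiff
    exact (sub_eq_zero.1 ((smul_eq_zero.1 hdiff).resolve_right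
      (sub_ne_zero.2 (hinj.ne hij)))).symm
  intro i
  rw [Finset.sum_congr rfl fun j _ => hconst j i, Finset.sum_const, Finset.card_univ,
    ← Nat.cast_smul_eq_nsmul k, smul_eq_mul] at hc
  exact (mul_eq_zero.1 hc).resolve_left (NeZero.ne _)

/-- A representation of a symmetric group in which every transposition acts as a reflection or as
the identity. -/
def SwapsActAsReflections (ρ : Representation k (Perm ι) V) : Prop :=
  ∀ i j, (movedSpace ρ (swap i j)).IsPrincipal

namespace SwapsActAsReflections

theorem movedSpace_eq_span (hρ : SwapsActAsReflections ρ) (ha : a ∈ movedSpace ρ (swap i j))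
    (ha0 : a ≠ 0) : movedSpace ρ (swap i j) = Submodule.span k {a} := by
  obtain ⟨b, hb⟩ := hρ i j
  rw [hb] at ha ⊢
  obtain ⟨c, rfl⟩ := Submodule.mem_span_singleton.1 ha
  exact (Submodule.span_singleton_smul_eq (left_ne_zero_of_smul ha0).isUnit b).symm

theorem movedSpace_le (hρ : SwapsActAsReflections ρ) (ha : a ∈ movedSpace ρ (swap i j))
    (ha0 : a ≠ 0) {U : Submodule k V} (haU : a ∈ U) : movedSpace ρ (swap i j) ≤ U :=
  (hρ.movedSpace_eq_span ha ha0).trans_le ((Submodule.span_singleton_le_iff_mem a U).2 haU)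

theorem eq_bot_or_eq_coinvariantsKer [Fintype ι] [NeZero (Fintype.card (Perm ι) : k)]
    (hρ : SwapsActAsReflections ρ) {U : Submodule k V} (hU : U ≤ Coinvariants.ker ρ)
    (hstab : ∀ σ, ∀ u ∈ U, ρ σ u ∈ U) : U = ⊥ ∨ U = Coinvariants.ker ρ := by
  by_cases hfix : ∀ u ∈ U, ∀ i j, ρ (swap i j) u = u
  · left
    rw [eq_bot_iff, ← (isCompl_coinvariantsKer_invariants ρ).inf_eq_bot]
    exact le_inf hU fun u hu => mem_invariants_of_swap (hfix u hu)
  · right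
    push Not at hfix
    obtain ⟨u, hu, i, j, hne⟩ := hfix
    have hmoved := apply_sub_mem_movedSpace (ρ := ρ) (swap i j) u
    have hij : i ≠ j := ne_of_mem_movedSpace_swap hmoved (sub_ne_zero.2 hne)
    refine le_antisymm hU ?_
    rw [coinvariantsKer_eq_iSup_movedSpace]
    refine iSup₂_le fun p q => ?_
    obtain rfl | hpq := eq_or_ne p q
    · exact (movedSpace_swap_self p).trans_le bot_le
    obtain ⟨σ, rfl, rfl⟩ := exists_perm_apply_eq hij hpq
    exact hρ.movedSpace_le (apply_mem_movedSpace_swap σ hmoved)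
      (apply_ne_zero σ (sub_ne_zero.2 hne)) (hstab σ _ (sub_mem (hstab _ u hu) hu))

theorem mem_movedSpace_of_mem_of_mem [NeZero (2 : k)] (hρ : SwapsActAsReflections ρ) (ha0 : a ≠ 0)
    (hjl : j ≠ l) (haj : a ∈ movedSpace ρ (swap i j)) (hal : a ∈ movedSpace ρ (swap i l))
    (hpq : p ≠ q) : a ∈ movedSpace ρ (swap p q) := by
  have hij := ne_of_mem_movedSpace_swap haj ha0
  have hil := ne_of_mem_movedSpace_swap hal ha0
  have hstar : ∀ m, m ≠ i → a ∈ movedSpace ρ (swap i m) := by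
    intro m hmi
    obtain rfl | hmj := eq_or_ne m j
    · exact haj
    obtain rfl | - := eq_or_ne m l
    · exact hal
    have hσj : ρ (swap l m) a ∈ movedSpace ρ (swap i j) := apply_mem_movedSpace_swap' haj
      (Equiv.swap_apply_of_ne_of_ne hil hmi.symm) (Equiv.swap_apply_of_ne_of_ne hjl hmj.symm)
    have hσm : ρ (swap l m) a ∈ movedSpace ρ (swap i m) := apply_mem_movedSpace_swap' hal
      (Equiv.swap_apply_of_ne_of_ne hil hmi.symm) (Equiv.swap_apply_left l m)
    exact hρ.movedSpace_le hσj (apply_ne_zero _ ha0) hσm haj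
  obtain rfl | hip := eq_or_ne i p
  · exact hstar q hpq.symm
  obtain rfl | hiq := eq_or_ne i q
  · rw [movedSpace_swap_comm]
    exact hstar p hpq
  have hp := mem_movedSpace_swap_iff.1 (hstar p hip.symm)
  have hq := mem_movedSpace_swap_iff.1 (hstar q hiq.symm)
  rw [mem_movedSpace_swap_iff, ← Equiv.swap_mul_swap_mul_swap hiq.symm hpq.symm,
    Equiv.swap_comm q i]
  simp [hp, hq]

theorem exists_sign_of_not_disjoint [Fintype ι] [NeZero (2 : k)] (hρ : SwapsActAsReflections ρ)
    (hjl : j ≠ l) (h : ¬Disjoint (movedSpace ρ (swap i j)) (movedSpace ρ (swap i l))) :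
    ∃ a ≠ 0, Coinvariants.ker ρ = Submodule.span k {a} ∧
      ∀ σ, ρ σ a = ((Equiv.Perm.sign σ : ℤ) : k) • a := by
  rw [Submodule.disjoint_def] at h
  push Not at h
  obtain ⟨a, haj, hal, ha0⟩ := h
  have hmem : ∀ p q, p ≠ q → a ∈ movedSpace ρ (swap p q) := fun p q hpq =>
    hρ.mem_movedSpace_of_mem_of_mem ha0 hjl haj hal hpq
  refine ⟨a, ha0, le_antisymm ?_ ?_, apply_eq_sign_smul_of_swap fun p q hpq =>
    mem_movedSpace_swap_iff.1 (hmem p q hpq)⟩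
  · rw [coinvariantsKer_eq_iSup_movedSpace]
    refine iSup₂_le fun p q => ?_
    obtain rfl | hpq := eq_or_ne p q
    · exact (movedSpace_swap_self p).trans_le bot_le
    · exact (hρ.movedSpace_eq_span (hmem p q hpq) ha0).le
  · exact (Submodule.span_singleton_le_iff_mem a _).2 (movedSpace_le_coinvariantsKer _ haj)

theorem apply_swap_eq_sub_of_disjoint [NeZero (2 : k)] (hρ : SwapsActAsReflections ρ)
    (ha : a ∈ movedSpace ρ (swap p q)) (ha0 : a ≠ 0) (hjp : j ≠ p) (hjq : j ≠ q)
    (hdisj : Disjoint (movedSpace ρ (swap p q)) (movedSpace ρ (swap p j))) :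
    ρ (swap p q) (ρ (swap q j) a) = ρ (swap q j) a - a := by
  have hpq := ne_of_mem_movedSpace_swap ha ha0
  have hsa := mem_movedSpace_swap_iff.1 ha
  set b := ρ (swap q j) a
  have hb : b ∈ movedSpace ρ (swap p j) := apply_mem_movedSpace_swap' ha
    (Equiv.swap_apply_of_ne_of_ne hpq hjp.symm) (Equiv.swap_apply_left q j)
  have hsb : ρ (swap p q) b ∈ movedSpace ρ (swap q j) := apply_mem_movedSpace_swap' hb
    (Equiv.swap_apply_left p q) (Equiv.swap_apply_of_ne_of_ne hjp hjq)
  obtain ⟨c, hc⟩ : ∃ c : k, c • ρ (swap p q) b = b - a := by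
    rw [← Submodule.mem_span_singleton,
      ← hρ.movedSpace_eq_span hsb (apply_ne_zero _ (apply_ne_zero _ ha0))]
    exact apply_sub_mem_movedSpace _ a
  have hsb' : ρ (swap p q) b = c • b - a := by
    have := congrArg (ρ (swap p q)) hc
    rw [map_smul, apply_swap_apply_swap, map_sub, hsa, sub_neg_eq_add] at this
    exact eq_sub_of_add_eq this.symm
  have hrel : (1 - c) • a = (1 - c * c) • b := by
    rw [hsb'] at hc
    linear_combination (norm := module) hc
  have hc1 : (1 - c) • a = 0 := Submodule.disjoint_def.1 hdisj _ (Submodule.smul_mem _ _ ha)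
    (hrel ▸ Submodule.smul_mem _ _ hb)
  rw [hsb', ← sub_eq_zero.1 ((smul_eq_zero.1 hc1).resolve_right ha0), one_smul]

theorem coinvariantsKer_eq_vectorSpan [Finite ι] (hρ : SwapsActAsReflections ρ) {f : ι → V}
    (hf : ∀ σ i, ρ σ (f i) = f (σ i)) (hinj : Function.Injective f) :
    Coinvariants.ker ρ = vectorSpan k (Set.range f) := by
  have hmem : ∀ i j, f j - f i ∈ movedSpace ρ (swap i j) := fun i j => by
    simpa only [hf, Equiv.swap_apply_left] using
      apply_sub_mem_movedSpace (ρ := ρ) (swap i j) (f i)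
  rw [coinvariantsKer_eq_iSup_movedSpace]
  apply le_antisymm
  · refine iSup₂_le fun i j => ?_
    obtain rfl | hij := eq_or_ne i j
    · exact (movedSpace_swap_self i).trans_le bot_le
    · exact hρ.movedSpace_le (hmem i j) (sub_ne_zero.2 (hinj.ne hij.symm))
        (vsub_mem_vectorSpan k ⟨j, rfl⟩ ⟨i, rfl⟩)
  · rw [vectorSpan_def, Submodule.span_le]
    rintro _ ⟨_, ⟨j, rfl⟩, _, ⟨i, rfl⟩, rfl⟩
    exact Submodule.mem_iSup_of_mem i (Submodule.mem_iSup_of_mem j (hmem i j))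

theorem sum_sub_apply_swap_sum [NeZero (2 : k)] [Fintype ι] (hρ : SwapsActAsReflections ρ)
    (hdisj : ∀ i j l, j ≠ l → Disjoint (movedSpace ρ (swap i j)) (movedSpace ρ (swap i l)))
    (ha : a ∈ movedSpace ρ (swap p q)) (ha0 : a ≠ 0) :
    ∑ j ∈ Finset.univ.erase p, ρ (swap q j) a -
      ρ (swap p q) (∑ j ∈ Finset.univ.erase p, ρ (swap q j) a) = (Fintype.card ι : k) • a := by
  have hqp := (ne_of_mem_movedSpace_swap ha ha0).symm
  have hterm : ∀ j ∈ Finset.univ.erase p, ρ (swap q j) a - ρ (swap p q) (ρ (swap q j) a) =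
      a + if q = j then a else 0 := by
    intro j hj
    have hjp := Finset.ne_of_mem_erase hj
    obtain rfl | hqj := eq_or_ne q j
    · have hqq : ρ (swap q q) a = a := by simp [← Equiv.Perm.one_def]
      rw [hqq, mem_movedSpace_swap_iff.1 ha, sub_neg_eq_add, if_pos rfl]
    · rw [hρ.apply_swap_eq_sub_of_disjoint ha ha0 hjp hqj.symm (hdisj p q j hqj), sub_sub_cancel,
        if_neg hqj, add_zero]
  rw [map_sum, ← Finset.sum_sub_distrib, Finset.sum_congr rfl hterm, Finset.sum_add_distrib,
    Finset.sum_const, Finset.sum_ite_eq, if_pos (by simpa using hqp), ← succ_nsmul,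
    Finset.card_erase_add_one (Finset.mem_univ p), Finset.card_univ, Nat.cast_smul_eq_nsmul]

theorem exists_equivariant_of_fixed [NeZero (2 : k)] [Fintype ι] [NeZero (Fintype.card ι : k)]
    (hρ : SwapsActAsReflections ρ)
    (hdisj : ∀ i j l, j ≠ l → Disjoint (movedSpace ρ (swap i j)) (movedSpace ρ (swap i l)))
    (ha : a ∈ movedSpace ρ (swap p q)) (ha0 : a ≠ 0)
    (hfix : ∀ σ : Perm ι, σ p = p → σ q = q → ρ σ a = a) :
    ∃ f : ι → V, Function.Injective f ∧ ∀ σ i, ρ σ (f i) = f (σ i) := by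
  have hpq := ne_of_mem_movedSpace_swap ha ha0
  set v := ∑ j ∈ Finset.univ.erase p, ρ (swap q j) a with hv
  have hequiv := apply_apply_swap_of_fixed (a := v) fun σ =>
    apply_sum_swap_of_fixed hpq hfix (σ := σ)
  refine ⟨fun i => ρ (swap p i) v, injective_of_equivariant hequiv hpq ?_, hequiv⟩
  have hpp : ρ (swap p p) v = v := by simp [← Equiv.Perm.one_def]
  rw [hpp, ← sub_ne_zero, hv, hρ.sum_sub_apply_swap_sum hdisj ha ha0]
  exact smul_ne_zero (NeZero.ne _) ha0

theorem mem_movedSpace_of_apply_swap_ne (hρ : SwapsActAsReflections ρ)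
    (ha : a ∈ movedSpace ρ (swap p q)) (hip : i ≠ p) (hiq : i ≠ q) (hjp : j ≠ p) (hjq : j ≠ q)
    (hne : ρ (swap i j) a ≠ a) : a ∈ movedSpace ρ (swap i j) := by
  have hstab : ρ (swap i j) a ∈ movedSpace ρ (swap p q) := apply_mem_movedSpace_swap' ha
    (Equiv.swap_apply_of_ne_of_ne hip.symm hjp.symm)
    (Equiv.swap_apply_of_ne_of_ne hiq.symm hjq.symm)
  exact hρ.movedSpace_le (sub_mem hstab ha) (sub_ne_zero.2 hne) (apply_sub_mem_movedSpace _ a)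
    ha

theorem eq_or_eq_of_mem_of_mem (hρ : SwapsActAsReflections ρ)
    (hdisj : ∀ i j l, j ≠ l → Disjoint (movedSpace ρ (swap i j)) (movedSpace ρ (swap i l)))
    (ha0 : a ≠ 0) (hapq : a ∈ movedSpace ρ (swap p q)) (haij : a ∈ movedSpace ρ (swap i j))
    (hjp : j ≠ p) (hjq : j ≠ q) {m : ι} : m = p ∨ m = q ∨ m = i ∨ m = j := by
  by_contra! hm
  obtain ⟨hmp, hmq, hmi, hmj⟩ := hm
  have hij := ne_of_mem_movedSpace_swap haij ha0
  have hbpq : ρ (swap j m) a ∈ movedSpace ρ (swap p q) := apply_mem_movedSpace_swap' hapq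
    (Equiv.swap_apply_of_ne_of_ne hjp.symm hmp.symm)
    (Equiv.swap_apply_of_ne_of_ne hjq.symm hmq.symm)
  have hbim : ρ (swap j m) a ∈ movedSpace ρ (swap i m) := apply_mem_movedSpace_swap' haij
    (Equiv.swap_apply_of_ne_of_ne hij hmi.symm) (Equiv.swap_apply_left j m)
  exact ha0 (Submodule.disjoint_def.1 (hdisj i j m hmj.symm) a haij
    (hρ.movedSpace_le hbpq (apply_ne_zero _ ha0) hbim hapq))

theorem card_eq_four_of_mem_of_mem [Fintype ι] (hρ : SwapsActAsReflections ρ)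
    (hdisj : ∀ i j l, j ≠ l → Disjoint (movedSpace ρ (swap i j)) (movedSpace ρ (swap i l)))
    (ha0 : a ≠ 0) (hapq : a ∈ movedSpace ρ (swap p q)) (haij : a ∈ movedSpace ρ (swap i j))
    (hip : i ≠ p) (hiq : i ≠ q) (hjp : j ≠ p) (hjq : j ≠ q) : Fintype.card ι = 4 := by
  have hpq := ne_of_mem_movedSpace_swap hapq ha0
  have hij := ne_of_mem_movedSpace_swap haij ha0
  have huniv : (Finset.univ : Finset ι) = {p, q, i, j} := by
    ext m
    simpa using hρ.eq_or_eq_of_mem_of_mem hdisj ha0 hapq haij hjp hjq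
  rw [← Finset.card_univ, huniv]
  simp [hpq, hij, hip.symm, hiq.symm, hjp.symm, hjq.symm]

theorem finrank_coinvariantsKer_eq_two_of_mem_of_mem [Finite ι] (hρ : SwapsActAsReflections ρ)
    (hdisj : ∀ i j l, j ≠ l → Disjoint (movedSpace ρ (swap i j)) (movedSpace ρ (swap i l)))
    (ha0 : a ≠ 0) (hapq : a ∈ movedSpace ρ (swap p q)) (haij : a ∈ movedSpace ρ (swap i j))
    (hip : i ≠ p) (hiq : i ≠ q) (hjp : j ≠ p) (hjq : j ≠ q) :
    Module.finrank k (Coinvariants.ker ρ) = 2 := by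
  have hpq := ne_of_mem_movedSpace_swap hapq ha0
  have hij := ne_of_mem_movedSpace_swap haij ha0
  have hb : ρ (swap q i) a ∈ movedSpace ρ (swap p i) := apply_mem_movedSpace_swap' hapq
    (Equiv.swap_apply_of_ne_of_ne hpq hip.symm) (Equiv.swap_apply_left q i)
  have hcpj : ρ (swap q j) a ∈ movedSpace ρ (swap p j) := apply_mem_movedSpace_swap' hapq
    (Equiv.swap_apply_of_ne_of_ne hpq hjp.symm) (Equiv.swap_apply_left q j)
  have hciq : ρ (swap q j) a ∈ movedSpace ρ (swap q i) := by
    rw [movedSpace_swap_comm]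
    exact apply_mem_movedSpace_swap' haij (Equiv.swap_apply_of_ne_of_ne hiq hij)
      (Equiv.swap_apply_right q j)
  have hker : Coinvariants.ker ρ = movedSpace ρ (swap p q) ⊔ movedSpace ρ (swap p i) := by
    have hstar : ∀ m, movedSpace ρ (swap p m) ≤ ⨆ m, movedSpace ρ (swap p m) := le_iSup _
    rw [coinvariantsKer_eq_iSup_movedSpace_swap p]
    refine le_antisymm (iSup_le fun m => ?_) (sup_le (hstar q) (hstar i))
    obtain rfl | rfl | rfl | rfl := hρ.eq_or_eq_of_mem_of_mem hdisj ha0 hapq haij hjp hjq (m := m)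
    · exact (movedSpace_swap_self m).trans_le bot_le
    · exact le_sup_left
    · exact le_sup_right
    · exact hρ.movedSpace_le hcpj (apply_ne_zero _ ha0)
        (movedSpace_swap_le_sup hip.symm hiq.symm hciq)
  have hinf := (hdisj p q i hiq.symm).eq_bot
  rw [hker]
  rw [hρ.movedSpace_eq_span hapq ha0, hρ.movedSpace_eq_span hb (apply_ne_zero _ ha0)] at hinf ⊢
  rw [← add_zero (Module.finrank _ _), ← finrank_bot k V, ← hinf,
    Submodule.finrank_sup_add_finrank_inf_eq, finrank_span_singleton ha0,
    finrank_span_singleton (apply_ne_zero _ ha0)]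

theorem coinvariantsKer_classification [Fintype ι] [NeZero (Fintype.card (Perm ι) : k)]
    (hρ : SwapsActAsReflections ρ) :
    Coinvariants.ker ρ = ⊥ ∨
    (∃ a ≠ 0, Coinvariants.ker ρ = Submodule.span k {a} ∧
      ∀ σ, ρ σ a = ((Equiv.Perm.sign σ : ℤ) : k) • a) ∨
    (∃ f : ι → V, Function.Injective f ∧ (∀ σ i, ρ σ (f i) = f (σ i)) ∧
      Coinvariants.ker ρ = vectorSpan k (Set.range f)) ∨
    (Fintype.card ι = 4 ∧ Module.finrank k (Coinvariants.ker ρ) = 2) := by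
  by_cases hbot : ∀ p q, movedSpace ρ (swap p q) = ⊥
  · left
    simp only [coinvariantsKer_eq_iSup_movedSpace, hbot, iSup_bot]
  push Not at hbot
  obtain ⟨p, q, hne⟩ := hbot
  obtain ⟨a, ha, ha0⟩ := Submodule.exists_mem_ne_zero_of_ne_bot hne
  have hcard := Fintype.one_lt_card_iff.2 ⟨p, q, ne_of_mem_movedSpace_swap ha ha0⟩
  have : NeZero (2 : k) := mod_cast neZero_natCast_of_le_card two_pos hcard
  have : NeZero (Fintype.card ι : k) := neZero_natCast_of_le_card (two_pos.trans_le hcard) le_rfl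
  by_cases hdisj : ∀ i j l, j ≠ l → Disjoint (movedSpace ρ (swap i j)) (movedSpace ρ (swap i l))
  · right; right
    by_cases hfix : ∀ i ∈ ({p, q}ᶜ : Set ι), ∀ j ∈ ({p, q}ᶜ : Set ι), i ≠ j → ρ (swap i j) a = a
    · left
      obtain ⟨f, hinj, hf⟩ := hρ.exists_equivariant_of_fixed hdisj ha ha0 fun σ hp hq =>
        apply_eq_self_of_swap hfix (σ := σ) fun i hi => by
          obtain rfl | rfl := not_not.1 hi
          · exact hp
          · exact hq
      exact ⟨f, hinj, hf, hρ.coinvariantsKer_eq_vectorSpan hf hinj⟩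
    · right
      push Not at hfix
      obtain ⟨i, hi, j, hj, -, hne⟩ := hfix
      simp only [Set.mem_compl_iff, Set.mem_insert_iff, Set.mem_singleton_iff, not_or] at hi hj
      have haij := hρ.mem_movedSpace_of_apply_swap_ne ha hi.1 hi.2 hj.1 hj.2 hne
      exact ⟨hρ.card_eq_four_of_mem_of_mem hdisj ha0 ha haij hi.1 hi.2 hj.1 hj.2,
        hρ.finrank_coinvariantsKer_eq_two_of_mem_of_mem hdisj ha0 ha haij hi.1 hi.2 hj.1 hj.2⟩
  · right; left
    push Not at hdisj
    obtain ⟨i, j, l, hjl, h⟩ := hdisj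
    exact hρ.exists_sign_of_not_disjoint hjl h

end SwapsActAsReflections

end Perm

end Representation

section Polynomial

open Equiv (swap Perm)
open Representation (Coinvariants.ker)

theorem X_sub_X_dvd_rename_swap_sub {σ R : Type*} [DecidableEq σ] [CommRing R] (i j : σ)
    (p : MvPolynomial σ R) : X i - X j ∣ rename (Equiv.swap i j) p - p := by
  rw [← Ideal.mem_span_singleton, ← Ideal.Quotient.eq]
  set J := Ideal.span {(X i - X j : MvPolynomial σ R)}
  suffices h : (Ideal.Quotient.mkₐ R J).comp (rename (Equiv.swap i j)) = Ideal.Quotient.mkₐ R J from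
    DFunLike.congr_fun h p
  have hij : Ideal.Quotient.mk J (X i) = Ideal.Quotient.mk J (X j) :=
    Ideal.Quotient.eq.2 (Ideal.mem_span_singleton_self _)
  ext l
  simp only [AlgHom.comp_apply, rename_X, Ideal.Quotient.mkₐ_eq_mk, Equiv.swap_apply_def]
  split_ifs with hi hj
  · rw [hi, hij]
  · rw [hj, hij]
  · rfl

variable {k : Type*} [Field k]

/-- The action of the permutations of `ι` on the polynomial ring by permuting the variables. -/
def renameRepresentation (k ι : Type*) [Field k] :
    Representation k (Perm ι) (MvPolynomial ι k) where
  toFun σ := (rename σ).toLinearMap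
  map_one' := LinearMap.ext rename_id_apply
  map_mul' σ τ := LinearMap.ext fun p => (rename_rename τ σ p).symm

namespace IsCompleteIntersection

theorem ne_top {A : Type*} [CommRing A] {I : Ideal A} (hI : IsCompleteIntersection I) :
    I ≠ ⊤ := by
  obtain ⟨rs, hrs, rfl⟩ := hI
  simpa [Ideal.ofList, eq_comm] using hrs.top_ne_smul

theorem finiteDimensional_and_finrank_le_height {σ : Type*} {I : Ideal (MvPolynomial σ k)}
    (hI : IsCompleteIntersection I) {V : Submodule k (MvPolynomial σ k)}
    (hVI : V ≤ I.restrictScalars k)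
    (hdisj : Disjoint V ((idealOfVars σ k * I).restrictScalars k)) :
    FiniteDimensional k V ∧ (Module.finrank k V : ℕ∞) ≤ I.height := by
  obtain ⟨rs, hrs, rfl⟩ := hI
  have hfin : {r | r ∈ rs}.Finite := rs.finite_toSet
  have : FiniteDimensional k (Submodule.span k {r | r ∈ rs}) := .span_of_finite k hfin
  obtain ⟨hfd, hle⟩ := finiteDimensional_and_finrank_le_of_le_sup hdisj
    (hVI.trans (span_le_span_sup_idealOfVars_mul _))
  classical
  have hlen : Module.finrank k (Submodule.span k {r | r ∈ rs}) ≤ rs.length := by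
    rw [← List.coe_toFinset]
    exact (finrank_span_finset_le_card _).trans rs.toFinset_card_le
  refine ⟨hfd, le_trans ?_ (length_le_height_of_isWeaklyRegular hrs.toIsWeaklyRegular)⟩
  exact mod_cast hle.trans hlen

end IsCompleteIntersection

variable {n : ℕ}

theorem EqIso.symm {W U : Submodule k (MvPolynomial (Fin n) k)} (hW : Stable W)
    (h : EqIso W U) : EqIso U W := by
  obtain ⟨e, he⟩ := h
  refine ⟨e.symm, fun σ u u' hu => ?_⟩
  have hew : e ⟨rename σ (e.symm u : MvPolynomial (Fin n) k), hW σ _ (e.symm u).2⟩ = u' :=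
    Subtype.ext ((he σ (e.symm u) _ rfl).trans (by rw [e.apply_symm_apply, hu]))
  rw [← hew, e.symm_apply_apply]

theorem hookModule_one :
    HookModule k n 1 = vectorSpan k (Set.range (X : Fin n → MvPolynomial (Fin n) k)) := by
  have hpairs : Finset.univ.filter (fun p : Fin 2 × Fin 2 => p.1 < p.2) = {(0, 1)} := by decide
  rw [HookModule, vectorSpan_def]
  apply le_antisymm
  · refine Submodule.span_le.2 ?_
    rintro _ ⟨a, rfl⟩
    refine Submodule.subset_span ⟨X (a 0), ⟨_, rfl⟩, X (a 1), ⟨_, rfl⟩, ?_⟩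
    simp only [Nat.reduceAdd, hpairs, Finset.prod_singleton, vsub_eq_sub]
  · refine Submodule.span_le.2 ?_
    rintro _ ⟨_, ⟨i, rfl⟩, _, ⟨j, rfl⟩, rfl⟩
    obtain rfl | hij := eq_or_ne i j
    · simp
    · refine Submodule.subset_span ⟨⟨![i, j], injective_pair_iff_ne.2 hij⟩, ?_⟩
      simp [hpairs]

theorem map_vectorSpan_range {ι M N : Type*} [AddCommGroup M] [Module k M] [AddCommGroup N]
    [Module k N] (T : M →ₗ[k] N) (f : ι → M) :
    (vectorSpan k (Set.range f)).map T = vectorSpan k (Set.range fun i => T (f i)) := by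
  rw [Set.range_comp' T f]
  exact T.toAffineMap.map_vectorSpan

variable {f : Fin n → MvPolynomial (Fin n) k}

theorem stable_vectorSpan_range (hf : ∀ (σ : Perm (Fin n)) i, rename σ (f i) = f (σ i)) :
    Stable (vectorSpan k (Set.range f)) := by
  intro σ p hp
  have hmap := map_vectorSpan_range (renameRepresentation k (Fin n) σ) f
  have hrange : (Set.range fun i => renameRepresentation k (Fin n) σ (f i)) = Set.range f := by
    rw [← σ.surjective.range_comp f]
    exact congrArg Set.range (funext (hf σ))
  rw [hrange] at hmap
  exact hmap.le (Submodule.mem_map_of_mem hp)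

theorem finrank_vectorSpan_range_of_equivariant [NeZero (n : k)]
    (hf : ∀ (σ : Perm (Fin n)) i, rename σ (f i) = f (σ i)) (hinj : Function.Injective f) :
    Module.finrank k (vectorSpan k (Set.range f)) = n - 1 := by
  have : NeZero (Fintype.card (Fin n) : k) := by simpa
  have hn : n ≠ 0 := by
    rintro rfl
    exact NeZero.ne ((0 : ℕ) : k) Nat.cast_zero
  refine (affineIndependent_of_equivariant (ρ := renameRepresentation k (Fin n)) hf
    hinj).finrank_vectorSpan ?_
  rw [Fintype.card_fin, Nat.sub_add_cancel (Nat.pos_of_ne_zero hn)]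

theorem eqIso_hookModule_of_equivariant [NeZero (n : k)]
    (hf : ∀ (σ : Perm (Fin n)) i, rename σ (f i) = f (σ i)) (hinj : Function.Injective f) :
    EqIso (vectorSpan k (Set.range f)) (HookModule k n 1) := by
  rw [hookModule_one]
  set T : MvPolynomial (Fin n) k →ₗ[k] MvPolynomial (Fin n) k :=
    ∑ i, (lcoeff k (Finsupp.single i 1)).smulRight (f i)
  have hTX : ∀ i, T (X i) = f i := fun i => by
    simp [T, coeff_X, Finsupp.single_left_inj]
  have hTrename : ∀ (σ : Perm (Fin n)) p, T (rename σ p) = rename σ (T p) := fun σ p => by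
    simp only [T, LinearMap.sum_apply, LinearMap.smulRight_apply, lcoeff_apply, map_sum, map_smul,
      hf]
    refine (Fintype.sum_equiv σ _ _ fun i => ?_).symm
    rw [← coeff_rename_mapDomain σ σ.injective p, Finsupp.mapDomain_single]
  have hXrename : ∀ (σ : Perm (Fin n)) i, rename σ (X i : MvPolynomial (Fin n) k) = X (σ i) :=
    fun σ i => rename_X σ i
  have hmap : (vectorSpan k (Set.range (X : Fin n → MvPolynomial (Fin n) k))).map T =
      vectorSpan k (Set.range f) := by
    rw [map_vectorSpan_range]
    exact congrArg (fun g => vectorSpan k (Set.range g)) (funext hTX)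
  have hfinrank := (finrank_vectorSpan_range_of_equivariant hXrename X_injective).trans
    (finrank_vectorSpan_range_of_equivariant hf hinj).symm
  have hsurj : Function.Surjective (T.restrict (Submodule.map_le_iff_le_comap.1 hmap.le)) := by
    rintro ⟨_, hq⟩
    obtain ⟨p, hp, rfl⟩ := hmap.ge hq
    exact ⟨⟨p, hp⟩, rfl⟩
  refine EqIso.symm (stable_vectorSpan_range hXrename) ⟨.ofBijective _
    ⟨(LinearMap.injective_iff_surjective_of_finrank_eq_finrank hfinrank).2 hsurj, hsurj⟩, ?_⟩
  intro σ v w hvw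
  exact (congrArg T hvw).trans (hTrename σ v)

namespace Stable

variable {V : Submodule k (MvPolynomial (Fin n) k)}

/-- The action of the symmetric group on a stable subspace. -/
def representation (hV : Stable V) : Representation k (Perm (Fin n)) V :=
  Subrepresentation.toRepresentation (ρ := renameRepresentation k (Fin n)) ⟨V, fun σ p => hV σ p⟩

theorem swapsActAsReflections [NeZero (Fintype.card (Perm (Fin n)) : k)] (hV : Stable V)
    [FiniteDimensional k V] (hV0 : ∀ p ∈ V, constantCoeff p = 0)
    (hht : Module.finrank k V ≤ (Ideal.span (V : Set (MvPolynomial (Fin n) k))).height) :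
    SwapsActAsReflections hV.representation := by
  intro i j
  obtain rfl | hij := eq_or_ne i j
  · rw [movedSpace_swap_self]
    exact bot_isPrincipal
  have hcard : 2 ≤ Fintype.card (Fin n) := Fintype.one_lt_card_iff.2 ⟨i, j, hij⟩
  have : NeZero (2 : k) := mod_cast neZero_natCast_of_le_card two_pos hcard
  have hrange : Set.range V.subtype = V := Subtype.range_coe
  have hs : hV.representation (swap i j) * hV.representation (swap i j) = 1 := by
    rw [← map_mul, Equiv.swap_mul_self, map_one]
  have hα : ∀ v, X i - X j ∣ V.subtype (hV.representation (swap i j) v - v) := fun v => by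
    rw [map_sub]
    exact X_sub_X_dvd_rename_swap_sub i j (v : MvPolynomial (Fin n) k)
  refine isPrincipal_range_sub_one_of_dvd V.subtype hs hα (by rwa [hrange]) ?_
  rw [hrange]
  refine ne_top_of_le_ne_top (RingHom.ker_ne_top (constantCoeff (R := k) (σ := Fin n)))
    (sup_le (Ideal.span_le.2 hV0) ((Ideal.span_singleton_le_iff_mem _).2 ?_))
  simp

/-- The span of the differences `σ v - v` in a stable subspace; when `n!` is invertible this is the
sum of its nontrivial isotypic components. -/
def nontrivialPart (hV : Stable V) : Submodule k (MvPolynomial (Fin n) k) :=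
  (Coinvariants.ker hV.representation).map V.subtype

theorem exists_symmetric_complement [NeZero (Fintype.card (Perm (Fin n)) : k)] (hV : Stable V)
    [FiniteDimensional k V] :
    ∃ fs : List (MvPolynomial (Fin n) k), (∀ f ∈ fs, f.IsSymmetric) ∧
      V = hV.nontrivialPart ⊔ Submodule.span k {x | x ∈ fs} ∧
      Module.finrank k V = Module.finrank k hV.nontrivialPart + fs.length := by
  have hcompl := isCompl_coinvariantsKer_invariants hV.representation
  obtain ⟨b, hb, hspan, -⟩ :=
    Submodule.exists_fun_fin_finrank_span_eq k (hV.representation.invariants : Set V)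
  have hfs : {x | x ∈ List.ofFn fun i => (b i : MvPolynomial (Fin n) k)} =
      V.subtype '' Set.range b := by
    ext x
    simp
  refine ⟨List.ofFn fun i => (b i : MvPolynomial (Fin n) k), ?_, ?_, ?_⟩
  · intro f hf σ
    obtain ⟨i, rfl⟩ := (List.mem_ofFn' _ _).1 hf
    exact congrArg Subtype.val (hb i σ)
  · rw [hfs, ← Submodule.map_span, hspan, Submodule.span_eq, nontrivialPart, ← Submodule.map_sup,
      hcompl.sup_eq_top, Submodule.map_subtype_top]
  · rw [List.length_ofFn, Submodule.span_eq, nontrivialPart, Submodule.finrank_map_subtype_eq,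
      Submodule.finrank_add_eq_of_isCompl hcompl]

theorem stable_nontrivialPart (hV : Stable V) : Stable hV.nontrivialPart := by
  rintro σ _ ⟨v, hv, rfl⟩
  exact ⟨hV.representation σ v, apply_mem_coinvariantsKer σ hv, rfl⟩

theorem eq_bot_or_eq_nontrivialPart [NeZero (Fintype.card (Perm (Fin n)) : k)]
    (hV : Stable V) (hρ : SwapsActAsReflections hV.representation)
    {U : Submodule k (MvPolynomial (Fin n) k)} (hU : U ≤ hV.nontrivialPart) (hstab : Stable U) :
    U = ⊥ ∨ U = hV.nontrivialPart := by
  have hUV : (U.comap V.subtype).map V.subtype = U := by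
    rw [Submodule.map_comap_subtype, inf_eq_right]
    exact hU.trans (Submodule.map_subtype_le V _)
  have hcomap : U.comap V.subtype ≤ Coinvariants.ker hV.representation := by
    rwa [← Submodule.map_le_map_iff_of_injective V.subtype_injective, hUV, ← nontrivialPart]
  rw [← hUV, nontrivialPart]
  exact (hρ.eq_bot_or_eq_coinvariantsKer hcomap fun σ u hu => hstab σ _ hu).imp
    (fun h => by rw [h, Submodule.map_bot]) fun h => by rw [h]

theorem nontrivialPart_classification [NeZero (Fintype.card (Perm (Fin n)) : k)]
    (hV : Stable V) (hρ : SwapsActAsReflections hV.representation) :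
    hV.nontrivialPart = ⊥ ∨
    (∃ g ≠ 0, hV.nontrivialPart = Submodule.span k {g} ∧
      ∀ σ : Perm (Fin n), rename σ g = ((Equiv.Perm.sign σ : ℤ) : k) • g) ∨
    (EqIso hV.nontrivialPart (HookModule k n 1) ∧
      Module.finrank k hV.nontrivialPart = n - 1) ∨
    (n = 4 ∧ Module.finrank k hV.nontrivialPart = 2) := by
  rcases hρ.coinvariantsKer_classification with
    h | ⟨a, ha0, ha, hsign⟩ | ⟨f, hinj, hf, hvec⟩ | ⟨hcard, hfinrank⟩
  · exact .inl (by rw [nontrivialPart, h, Submodule.map_bot])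
  · refine .inr (.inl ⟨a, by simpa using ha0, ?_, fun σ => congrArg Subtype.val (hsign σ)⟩)
    rw [nontrivialPart, ha, Submodule.map_span, Set.image_singleton, Submodule.subtype_apply]
  · rw [nontrivialPart, hvec, map_vectorSpan_range]
    rcases n.eq_zero_or_pos with rfl | hn
    · exact .inl (by rw [Set.range_eq_empty, vectorSpan_empty])
    have : NeZero (n : k) := neZero_natCast_of_le_card hn (Fintype.card_fin n).ge
    have hf' : ∀ (σ : Perm (Fin n)) i, rename σ (f i : MvPolynomial (Fin n) k) = f (σ i) :=
      fun σ i => congrArg Subtype.val (hf σ i)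
    have hinj' := V.subtype_injective.comp hinj
    exact .inr (.inr (.inl ⟨eqIso_hookModule_of_equivariant hf' hinj',
      finrank_vectorSpan_range_of_equivariant hf' hinj'⟩))
  · rw [nontrivialPart, Submodule.finrank_map_subtype_eq]
    exact .inr (.inr (.inr ⟨(Fintype.card_fin n).symm.trans hcard, hfinrank⟩))

end Stable

end Polynomial

theorem stmt6_general {k : Type*} [Field k] {n : ℕ} (hn : (n.factorial : k) ≠ 0)
    (I : Ideal (MvPolynomial (Fin n) k)) (hI0 : I ≠ ⊥)
    (hCI : IsCompleteIntersection I)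
    (V : Submodule k (MvPolynomial (Fin n) k))
    (hVI : V ≤ I.restrictScalars k)
    (hVstab : Stable V)
    (hVgr : ∀ p ∈ V, ∀ d, homogeneousComponent d p ∈ V)
    (hdisj : Disjoint V ((idealOfVars (Fin n) k * I).restrictScalars k))
    (hsup : V ⊔ (idealOfVars (Fin n) k * I).restrictScalars k = I.restrictScalars k) :
    (∃ fs : List (MvPolynomial (Fin n) k), (∀ f ∈ fs, f.IsSymmetric) ∧
      V = Submodule.span k {x | x ∈ fs} ∧ Module.finrank k V = fs.length ∧
      1 ≤ fs.length ∧ fs.length ≤ n) ∨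
    (∃ (g : MvPolynomial (Fin n) k) (fs : List (MvPolynomial (Fin n) k)),
      (∀ σ : Equiv.Perm (Fin n), rename (⇑σ) g = ((Equiv.Perm.sign σ : ℤ) : k) • g) ∧
      g ≠ 0 ∧ (∀ f ∈ fs, f.IsSymmetric) ∧
      V = Submodule.span k ({g} ∪ {x | x ∈ fs}) ∧
      Module.finrank k V = fs.length + 1 ∧ fs.length ≤ n - 1) ∨
    (∃ (W : Submodule k (MvPolynomial (Fin n) k)) (fs : List (MvPolynomial (Fin n) k)),
      W ≤ V ∧ Stable W ∧ EqIso W (HookModule k n 1) ∧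
      (∀ f ∈ fs, f.IsSymmetric) ∧
      V = W ⊔ Submodule.span k {x | x ∈ fs} ∧
      Module.finrank k V = (n - 1) + fs.length ∧ fs.length ≤ 1) ∨
    (n = 4 ∧
      ∃ (W : Submodule k (MvPolynomial (Fin n) k)) (fs : List (MvPolynomial (Fin n) k)),
      W ≤ V ∧ Stable W ∧ Module.finrank k W = 2 ∧
      (∀ U ≤ W, Stable U → U = ⊥ ∨ U = W) ∧
      (∀ f ∈ fs, f.IsSymmetric) ∧
      V = W ⊔ Submodule.span k {x | x ∈ fs} ∧
      Module.finrank k V = 2 + fs.length ∧ fs.length ≤ 2) := by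
  have : NeZero (Fintype.card (Equiv.Perm (Fin n)) : k) :=
    ⟨by rwa [Fintype.card_perm, Fintype.card_fin]⟩
  obtain ⟨hfd, hht⟩ := hCI.finiteDimensional_and_finrank_le_height hVI hdisj
  have hspan := span_eq_of_sup_idealOfVars_mul_eq hVgr hsup
  have hpos : 1 ≤ Module.finrank k V := by
    rw [Nat.one_le_iff_ne_zero, Ne, Submodule.finrank_eq_zero]
    rintro rfl
    exact hI0 (by rw [← hspan, Submodule.bot_coe, Ideal.span_singleton_zero])
  have hle : Module.finrank k V ≤ n := by
    simpa using hht.trans (height_le_card_of_ne_top hCI.ne_top)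
  have hρ := hVstab.swapsActAsReflections
    (fun p => constantCoeff_eq_zero_of_mem hCI.ne_top hVI hVgr) (hspan ▸ hht)
  obtain ⟨fs, hsym, hV, hdim⟩ := hVstab.exists_symmetric_complement
  have hWV : hVstab.nontrivialPart ≤ V := Submodule.map_subtype_le V _
  have hW := hVstab.stable_nontrivialPart
  rcases hVstab.nontrivialPart_classification hρ with
    h | ⟨g, hg0, hg, hsign⟩ | ⟨hiso, hrank⟩ | ⟨rfl, hrank⟩
  · rw [h, bot_sup_eq] at hV
    rw [h, finrank_bot] at hdim
    exact .inl ⟨fs, hsym, hV, by omega, by omega, by omega⟩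
  · rw [hg, ← Submodule.span_union] at hV
    rw [hg, finrank_span_singleton hg0] at hdim
    exact .inr (.inl ⟨g, fs, hsign, hg0, hsym, hV, by omega, by omega⟩)
  · exact .inr (.inr (.inl ⟨_, fs, hWV, hW, hiso, hsym, hV, by omega, by omega⟩))
  · exact .inr (.inr (.inr ⟨rfl, _, fs, hWV, hW, hrank,
      fun U => hVstab.eq_bot_or_eq_nontrivialPart hρ, hsym, hV, by omega, by omega⟩))

/-- If `I ⊆ R = k[x_1,…,x_n]` is a (nonzero) `S_n`-stable
complete intersection ideal, then `I/mI` — equivalently any equivariant lift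
`V` of it, with `V ⊕ mI = I` — is isomorphic as an `S_n`-representation to one
of:
(I) a direct sum of `m` trivial representations `S^{(n)}`, `1 ≤ m ≤ n`;
(II) one alternating representation `S^{(1^n)}` plus at most `n-1` trivials;
(III) one standard representation `S^{(n-1,1)}` plus at most one trivial;
(IV) for `n = 4` only, one copy of `S^{(2,2)}` (the unique 2-dimensional
irreducible of `S_4`) plus at most two trivials. -/
theorem stmt6 {k : Type*} [Field k] [CharZero k] {n : ℕ}
    (I : Ideal (MvPolynomial (Fin n) k)) (hI0 : I ≠ ⊥)
    (hIstab : ∀ σ : Equiv.Perm (Fin n), ∀ p ∈ I, rename (⇑σ) p ∈ I)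
    (hIhom : ∀ p ∈ I, ∀ d, homogeneousComponent d p ∈ I)
    (hCI : IsCompleteIntersection I)
    -- `V` is an equivariant graded lift of `I/mI`:
    (V : Submodule k (MvPolynomial (Fin n) k))
    (hVI : V ≤ I.restrictScalars k)
    (hVstab : Stable V)
    (hVgr : ∀ p ∈ V, ∀ d, homogeneousComponent d p ∈ V)
    (hdisj : Disjoint V ((Ideal.span (Set.range (X : Fin n → MvPolynomial (Fin n) k)) * I).restrictScalars k))
    (hsup : V ⊔ (Ideal.span (Set.range (X : Fin n → MvPolynomial (Fin n) k)) * I).restrictScalars k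
      = I.restrictScalars k) :
    -- Case I: a direct sum of `m` trivial representations, `1 ≤ m ≤ n`:
    (∃ fs : List (MvPolynomial (Fin n) k), (∀ f ∈ fs, f.IsSymmetric) ∧
      V = Submodule.span k {x | x ∈ fs} ∧ Module.finrank k V = fs.length ∧
      1 ≤ fs.length ∧ fs.length ≤ n) ∨
    -- Case II: one alternating representation plus at most `n-1` trivials:
    (∃ (g : MvPolynomial (Fin n) k) (fs : List (MvPolynomial (Fin n) k)),
      (∀ σ : Equiv.Perm (Fin n), rename (⇑σ) g = ((Equiv.Perm.sign σ : ℤ) : k) • g) ∧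
      g ≠ 0 ∧ (∀ f ∈ fs, f.IsSymmetric) ∧
      V = Submodule.span k ({g} ∪ {x | x ∈ fs}) ∧
      Module.finrank k V = fs.length + 1 ∧ fs.length ≤ n - 1) ∨
    -- Case III: one standard representation plus at most one trivial:
    (∃ (W : Submodule k (MvPolynomial (Fin n) k)) (fs : List (MvPolynomial (Fin n) k)),
      W ≤ V ∧ Stable W ∧ EqIso W (HookModule k n 1) ∧
      (∀ f ∈ fs, f.IsSymmetric) ∧
      V = W ⊔ Submodule.span k {x | x ∈ fs} ∧
      Module.finrank k V = (n - 1) + fs.length ∧ fs.length ≤ 1) ∨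
    -- Case IV (`n = 4`): one copy of `S^{(2,2)}` plus at most two trivials:
    (n = 4 ∧
      ∃ (W : Submodule k (MvPolynomial (Fin n) k)) (fs : List (MvPolynomial (Fin n) k)),
      W ≤ V ∧ Stable W ∧ Module.finrank k W = 2 ∧
      (∀ U ≤ W, Stable U → U = ⊥ ∨ U = W) ∧
      (∀ f ∈ fs, f.IsSymmetric) ∧
      V = W ⊔ Submodule.span k {x | x ∈ fs} ∧
      Module.finrank k V = 2 + fs.length ∧ fs.length ≤ 2) := by
  exact stmt6_general (Nat.cast_ne_zero.2 n.factorial_ne_zero) I hI0 hCI V hVI hVstab hVgr hdisj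
    hsup

end
end

section
/- In R = k[x_1,x_2,x_3,x_4] over a field k of characteristic zero, the sequence e_1^3, e_1^2 - e_2, e_3, e_4 is a regular sequence, where e_i denotes the i-th elementary symmetric polynomial. -/
open MvPolynomial

/-!
Modulo `e₁ = y`, the equations `e₂ = y²`, `e₃ = 0`, `e₄ = 0` say that `x₁, …, x₄` are the roots of
`p(T) = T⁴ - y T³ + y² T²`. They can be traded for the vanishing of the iterated divided differences
`p[x₁]`, `p[x₁, x₂]`, `p[x₁, x₂, x₃]`, each of which is monic in its last variable. A polynomial
monic in a new variable `T` may be inserted anywhere into a weakly regular sequence of `A`, since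
`A[T]` modulo it is free over `A` and the same remains true over every quotient of `A`. Inserting
successively `yᵐ`, `p[x₁]`, `p[x₁, x₂]`, `p[x₁, x₂, x₃]` gives a weakly regular sequence in
`R[x₁, x₂, x₃, y] = R[x₁, x₂, x₃, x₄]`.
-/

section CommRing

open RingTheory.Sequence Polynomial

variable {R S M : Type*} [CommRing R] [CommRing S] [AddCommGroup M] [Module R M]

lemma isWeaklyRegular_map_ringEquiv_iff (e : R ≃+* S) (rs : List R) :
    IsWeaklyRegular S (rs.map e) ↔ IsWeaklyRegular R rs :=
  (e.toAddEquiv.isWeaklyRegular_congr <| List.forall₂_map_right_iff.mpr <|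
    List.forall₂_same.mpr fun r _ x ↦ map_mul e r x).symm

lemma isWeaklyRegular_append_iff_quotient (rs₁ rs₂ : List R) :
    IsWeaklyRegular R (rs₁ ++ rs₂) ↔ IsWeaklyRegular R rs₁ ∧
      IsWeaklyRegular (R ⧸ Ideal.ofList rs₁) (rs₂.map (Ideal.Quotient.mk (Ideal.ofList rs₁))) := by
  rw [isWeaklyRegular_append_iff, Ideal.smul_eq_mul, Ideal.mul_top]
  exact and_congr_right' (isWeaklyRegular_map_algebraMap_iff _ _ rs₂).symm

lemma isWeaklyRegular_units_mul_cons (u : Rˣ) {r : R} {rs : List R}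
    (h : IsWeaklyRegular R (r :: rs)) : IsWeaklyRegular R (u * r :: rs) := by
  rw [← List.singleton_append, isWeaklyRegular_append_iff_quotient,
    isWeaklyRegular_singleton_iff, Ideal.ofList_singleton] at h ⊢
  rw [Ideal.span_singleton_mul_left_unit u.isUnit]
  exact ⟨(u.isSMulRegular R).mul h.1, h.2⟩

lemma isWeaklyRegular_append_cons_of_sub_units_mul_mem {rs₁ rs₂ : List R} {r r' : R} (u : Rˣ)
    (hr : r' - u * r ∈ Ideal.ofList rs₁) (h : IsWeaklyRegular R (rs₁ ++ r :: rs₂)) :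
    IsWeaklyRegular R (rs₁ ++ r' :: rs₂) := by
  rw [isWeaklyRegular_append_iff_quotient, List.map_cons] at h ⊢
  rw [Ideal.Quotient.eq.mpr hr, map_mul]
  exact ⟨h.1, isWeaklyRegular_units_mul_cons (u.map (Ideal.Quotient.mk _).toMonoidHom) h.2⟩

lemma isWeaklyRegular_of_flat [Module.Flat R M] {rs : List R} (h : IsWeaklyRegular R rs) :
    IsWeaklyRegular M rs :=
  ((TensorProduct.rid R M).isWeaklyRegular_congr rs).mp h.isWeaklyRegular_lTensor

lemma isWeaklyRegular_cons_map_C {q : R[X]} (hq : q.Monic) {rs : List R}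
    (h : IsWeaklyRegular R rs) : IsWeaklyRegular R[X] (q :: rs.map Polynomial.C) := by
  have : Module.Free R (R[X] ⧸ Ideal.span {q}) := hq.free_quotient
  rw [← List.singleton_append, isWeaklyRegular_append_iff_quotient, Ideal.ofList_singleton,
    isWeaklyRegular_singleton_iff, List.map_map]
  exact ⟨hq.isRegular.left,
    (isWeaklyRegular_map_algebraMap_iff _ _ rs).mpr (isWeaklyRegular_of_flat h)⟩

lemma isWeaklyRegular_map_C_append_cons_map_C {q : R[X]} (hq : q.Monic) {rs₁ rs₂ : List R}
    (h : IsWeaklyRegular R (rs₁ ++ rs₂)) :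
    IsWeaklyRegular R[X] (rs₁.map Polynomial.C ++ q :: rs₂.map Polynomial.C) := by
  rw [isWeaklyRegular_append_iff_quotient] at h ⊢
  refine ⟨h.1.of_flat, ?_⟩
  rw [← Ideal.map_ofList, ← isWeaklyRegular_map_ringEquiv_iff
    (Ideal.polynomialQuotientEquivQuotientPolynomial _).symm]
  simpa [Function.comp_def] using
    isWeaklyRegular_cons_map_C (hq.map (Ideal.Quotient.mk (Ideal.ofList rs₁))) h.2

end CommRing

section MvPolynomial

open RingTheory.Sequence

variable {R σ : Type*} [CommRing R]

lemma finSuccEquiv_rename_succ {n : ℕ} (p : MvPolynomial (Fin n) R) :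
    finSuccEquiv R n (rename Fin.succ p) = Polynomial.C p := by
  induction p using MvPolynomial.induction_on with
  | C a => simp [finSuccEquiv_apply]
  | add p q hp hq => simp only [map_add, hp, hq]
  | mul_X p i hp => simp only [map_mul, rename_X, hp, finSuccEquiv_X_succ]

lemma isWeaklyRegular_map_rename_append_cons_map_rename {n : ℕ}
    {rs₁ rs₂ : List (MvPolynomial (Fin n) R)} {q : MvPolynomial (Fin (n + 1)) R}
    (hq : (finSuccEquiv R n q).Monic)
    (h : IsWeaklyRegular (MvPolynomial (Fin n) R) (rs₁ ++ rs₂)) :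
    IsWeaklyRegular (MvPolynomial (Fin (n + 1)) R)
      (rs₁.map (rename Fin.succ) ++ q :: rs₂.map (rename Fin.succ)) := by
  rw [← isWeaklyRegular_map_ringEquiv_iff (finSuccEquiv R n).toRingEquiv]
  simpa [Function.comp_def, finSuccEquiv_rename_succ] using
    isWeaklyRegular_map_C_append_cons_map_C hq h

lemma isRegular_of_constantCoeff_eq_zero [Nontrivial R] {rs : List (MvPolynomial σ R)}
    (h : IsWeaklyRegular (MvPolynomial σ R) rs) (hrs : ∀ r ∈ rs, constantCoeff r = 0) :
    IsRegular (MvPolynomial σ R) rs := by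
  refine ⟨h, fun htop ↦ ?_⟩
  have hle : Ideal.ofList rs ≤ RingHom.ker (constantCoeff (σ := σ) (R := R)) :=
    Ideal.span_le.mpr hrs
  rw [Ideal.smul_eq_mul, Ideal.mul_top] at htop
  exact RingHom.ker_ne_top _ (top_le_iff.mp (htop.trans_le hle))

variable [Fintype σ]

lemma constantCoeff_esymm {n : ℕ} (hn : n ≠ 0) : constantCoeff (esymm σ R n) = 0 := by
  rw [esymm, map_sum]
  refine Finset.sum_eq_zero fun s hs ↦ ?_
  obtain ⟨-, rfl⟩ := Finset.mem_powersetCard.mp hs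
  simp [Finset.prod_const, hn]

/-- The automorphism of `R[X]` making `∑ j, X j` a coordinate: it sends `X i` to `∑ j, X j` and
fixes the other variables. -/
noncomputable def sumShear [DecidableEq σ] (i : σ) : MvPolynomial σ R ≃ₐ[R] MvPolynomial σ R :=
  AlgEquiv.ofAlgHom (aeval (Function.update X i (∑ j, X j)))
    (aeval (Function.update X i (X i + X i - ∑ j, X j)))
    (by
      ext1 j
      obtain rfl | hj := eq_or_ne j i
      · simp [Finset.sum_update_of_mem, Finset.sum_sdiff_eq_sub]
      · simp [hj])
    (by
      ext1 j
      obtain rfl | hj := eq_or_ne j i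
      · simp [Finset.sum_update_of_mem, Finset.sum_sdiff_eq_sub]
      · simp [hj])

lemma sumShear_X_self [DecidableEq σ] (i : σ) :
    sumShear i (X i : MvPolynomial σ R) = esymm σ R 1 := by
  simp [sumShear]

lemma sumShear_X_of_ne [DecidableEq σ] {i j : σ} (h : j ≠ i) :
    sumShear i (X j : MvPolynomial σ R) = X j := by
  simp [sumShear, h]

end MvPolynomial

section DividedDifferences

open RingTheory.Sequence

variable {R S : Type*} [CommRing R] [CommRing S]

/-- The value at `a` of the quartic `T⁴ - y T³ + y² T²`, whose roots have `e₁ = y`, `e₂ = y²` and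
`e₃ = e₄ = 0`. -/
def quartic (y a : R) : R :=
  a ^ 4 - y * a ^ 3 + y ^ 2 * a ^ 2

/-- The divided difference of `quartic y` at two points: `(quartic y a - quartic y b) / (a - b)`
with the division carried out. -/
def quarticDivDiff₂ (y a b : R) : R :=
  a ^ 3 + a ^ 2 * b + a * b ^ 2 + b ^ 3 - y * (a ^ 2 + a * b + b ^ 2) + y ^ 2 * (a + b)

/-- The divided difference of `quartic y` at three points:
`(quarticDivDiff₂ y a b - quarticDivDiff₂ y a c) / (b - c)` with the division carried out. -/
def quarticDivDiff₃ (y a b c : R) : R :=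
  a ^ 2 + b ^ 2 + c ^ 2 + a * b + a * c + b * c - y * (a + b + c) + y ^ 2

variable {F : Type*} [FunLike F R S] [RingHomClass F R S]

lemma map_quartic (f : F) (y a : R) : f (quartic y a) = quartic (f y) (f a) := by
  simp [quartic]

lemma map_quarticDivDiff₂ (f : F) (y a b : R) :
    f (quarticDivDiff₂ y a b) = quarticDivDiff₂ (f y) (f a) (f b) := by
  simp [quarticDivDiff₂]

lemma map_quarticDivDiff₃ (f : F) (y a b c : R) :
    f (quarticDivDiff₃ y a b c) = quarticDivDiff₃ (f y) (f a) (f b) (f c) := by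
  simp [quarticDivDiff₃]

lemma monic_quartic (y : R) : (quartic (Polynomial.C y) Polynomial.X).Monic := by
  nontriviality R
  unfold quartic
  simp only [← Polynomial.C_pow]
  monicity!

lemma monic_quarticDivDiff₂ (y a : R) :
    (quarticDivDiff₂ (Polynomial.C y) (Polynomial.C a) Polynomial.X).Monic := by
  unfold quarticDivDiff₂
  monicity!

lemma monic_quarticDivDiff₃ (y a b : R) :
    (quarticDivDiff₃ (Polynomial.C y) (Polynomial.C a) (Polynomial.C b) Polynomial.X).Monic := by
  unfold quarticDivDiff₃
  monicity!

lemma isWeaklyRegular_quarticDivDiff (m : ℕ) :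
    IsWeaklyRegular (MvPolynomial (Fin 4) R)
      [(X 3 : MvPolynomial (Fin 4) R) ^ m, quarticDivDiff₃ (X 3) (X 2) (X 1) (X 0),
        quarticDivDiff₂ (X 3) (X 2) (X 1), quartic (X 3) (X 2)] := by
  -- Each inserted variable becomes `X 0`, so `x₁, x₂, x₃, y` end up as `X 2, X 1, X 0, X 3`.
  have h₀ : IsWeaklyRegular (MvPolynomial (Fin 1) R) [(X 0 : MvPolynomial (Fin 1) R) ^ m] := by
    simpa using isWeaklyRegular_map_rename_append_cons_map_rename (R := R) (n := 0) (rs₁ := [])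
      (rs₂ := []) (q := X 0 ^ m)
      (by simpa only [map_pow, finSuccEquiv_X_zero] using Polynomial.monic_X_pow m) (.nil _ _)
  have h₁ : IsWeaklyRegular (MvPolynomial (Fin 2) R)
      [(X 1 : MvPolynomial (Fin 2) R) ^ m, quartic (X 1) (X 0)] := by
    simpa using isWeaklyRegular_map_rename_append_cons_map_rename (R := R) (n := 1)
      (rs₁ := [X 0 ^ m]) (rs₂ := []) (q := quartic (X (Fin.succ 0)) (X 0))
      (by simpa only [map_quartic, finSuccEquiv_X_zero, finSuccEquiv_X_succ] using monic_quartic _)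
      h₀
  have h₂ : IsWeaklyRegular (MvPolynomial (Fin 3) R)
      [(X 2 : MvPolynomial (Fin 3) R) ^ m, quarticDivDiff₂ (X 2) (X 1) (X 0),
        quartic (X 2) (X 1)] := by
    simpa [map_quartic] using isWeaklyRegular_map_rename_append_cons_map_rename (R := R) (n := 2)
      (rs₁ := [X 1 ^ m]) (rs₂ := [quartic (X 1) (X 0)])
      (q := quarticDivDiff₂ (X (Fin.succ 1)) (X (Fin.succ 0)) (X 0))
      (by simpa only [map_quarticDivDiff₂, finSuccEquiv_X_zero, finSuccEquiv_X_succ]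
        using monic_quarticDivDiff₂ _ _) h₁
  simpa [map_quartic, map_quarticDivDiff₂] using
    isWeaklyRegular_map_rename_append_cons_map_rename (R := R) (n := 3)
      (rs₁ := [X 2 ^ m]) (rs₂ := [quarticDivDiff₂ (X 2) (X 1) (X 0), quartic (X 2) (X 1)])
      (q := quarticDivDiff₃ (X (Fin.succ 2)) (X (Fin.succ 1)) (X (Fin.succ 0)) (X 0))
      (by simpa only [map_quarticDivDiff₃, finSuccEquiv_X_zero, finSuccEquiv_X_succ]
        using monic_quarticDivDiff₃ _ _ _) h₂

end DividedDifferences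

section Esymm

open RingTheory.Sequence

variable {R : Type*} [CommRing R]

lemma esymm_fin_four_one : esymm (Fin 4) R 1 = X 0 + X 1 + X 2 + X 3 := by
  rw [esymm_one, Fin.sum_univ_four]

lemma esymm_fin_four_two :
    esymm (Fin 4) R 2 = X 0 * X 1 + X 0 * X 2 + X 0 * X 3 + X 1 * X 2 + X 1 * X 3 + X 2 * X 3 := by
  have h : Finset.powersetCard 2 (Finset.univ : Finset (Fin 4)) =
      {{0, 1}, {0, 2}, {0, 3}, {1, 2}, {1, 3}, {2, 3}} := by decide
  simp +decide [esymm, h, add_assoc]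

lemma esymm_fin_four_three :
    esymm (Fin 4) R 3 = X 0 * X 1 * X 2 + X 0 * X 1 * X 3 + X 0 * X 2 * X 3 + X 1 * X 2 * X 3 := by
  have h : Finset.powersetCard 3 (Finset.univ : Finset (Fin 4)) =
      {{0, 1, 2}, {0, 1, 3}, {0, 2, 3}, {1, 2, 3}} := by decide
  simp +decide [esymm, h, add_assoc, mul_assoc]

lemma esymm_fin_four_four : esymm (Fin 4) R 4 = X 0 * X 1 * X 2 * X 3 := by
  have h : Finset.powersetCard 4 (Finset.univ : Finset (Fin 4)) = {Finset.univ} := by decide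
  simp [esymm, h, Fin.prod_univ_four]

lemma quarticDivDiff₃_esymm :
    quarticDivDiff₃ (esymm (Fin 4) R 1) (X 2) (X 1) (X 0) =
      esymm (Fin 4) R 1 ^ 2 - esymm (Fin 4) R 2 := by
  rw [quarticDivDiff₃, esymm_fin_four_one, esymm_fin_four_two]
  ring

lemma quarticDivDiff₂_esymm :
    quarticDivDiff₂ (esymm (Fin 4) R 1) (X 2) (X 1) =
      (X 1 + X 2) * (esymm (Fin 4) R 1 ^ 2 - esymm (Fin 4) R 2) + esymm (Fin 4) R 3 := by
  rw [quarticDivDiff₂, esymm_fin_four_one, esymm_fin_four_two, esymm_fin_four_three]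
  ring

lemma quartic_esymm :
    quartic (esymm (Fin 4) R 1) (X 2) =
      X 2 ^ 2 * (esymm (Fin 4) R 1 ^ 2 - esymm (Fin 4) R 2) + X 2 * esymm (Fin 4) R 3 -
        esymm (Fin 4) R 4 := by
  rw [quartic, esymm_fin_four_one, esymm_fin_four_two, esymm_fin_four_three, esymm_fin_four_four]
  ring

lemma isWeaklyRegular_esymm_fin_four (m : ℕ) :
    IsWeaklyRegular (MvPolynomial (Fin 4) R)
      [esymm (Fin 4) R 1 ^ m, esymm (Fin 4) R 1 ^ 2 - esymm (Fin 4) R 2, esymm (Fin 4) R 3,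
        esymm (Fin 4) R 4] := by
  have hshear : IsWeaklyRegular (MvPolynomial (Fin 4) R)
      [esymm (Fin 4) R 1 ^ m, esymm (Fin 4) R 1 ^ 2 - esymm (Fin 4) R 2,
        quarticDivDiff₂ (esymm (Fin 4) R 1) (X 2) (X 1), quartic (esymm (Fin 4) R 1) (X 2)] := by
    rw [← quarticDivDiff₃_esymm]
    have := (isWeaklyRegular_map_ringEquiv_iff (sumShear (3 : Fin 4)).toRingEquiv _).mpr
      (isWeaklyRegular_quarticDivDiff (R := R) m)
    simpa [map_quartic, map_quarticDivDiff₂, map_quarticDivDiff₃, sumShear_X_self, sumShear_X_of_ne,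
      -esymm_one] using this
  set e₁ := esymm (Fin 4) R 1
  set q := e₁ ^ 2 - esymm (Fin 4) R 2
  have hthree : IsWeaklyRegular (MvPolynomial (Fin 4) R)
      [e₁ ^ m, q, esymm (Fin 4) R 3, quartic e₁ (X 2)] := by
    refine isWeaklyRegular_append_cons_of_sub_units_mul_mem (rs₁ := [e₁ ^ m, q]) 1 ?_ hshear
    have hq : q ∈ Ideal.ofList [e₁ ^ m, q] := Ideal.subset_span (by simp)
    convert Ideal.mul_mem_left _ (-(X 1 + X 2)) hq using 1
    rw [quarticDivDiff₂_esymm, Units.val_one]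
    ring
  refine isWeaklyRegular_append_cons_of_sub_units_mul_mem (rs₁ := [e₁ ^ m, q, esymm (Fin 4) R 3])
    (-1) ?_ hthree
  have hq : q ∈ Ideal.ofList [e₁ ^ m, q, esymm (Fin 4) R 3] := Ideal.subset_span (by simp)
  have he : esymm (Fin 4) R 3 ∈ Ideal.ofList [e₁ ^ m, q, esymm (Fin 4) R 3] :=
    Ideal.subset_span (by simp)
  convert Ideal.add_mem _ (Ideal.mul_mem_left _ (X 2 ^ 2) hq) (Ideal.mul_mem_left _ (X 2) he)
    using 1
  rw [quartic_esymm, Units.val_neg, Units.val_one]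
  ring

theorem stmt14_general [Nontrivial R] {m : ℕ} (hm : m ≠ 0) :
    IsRegular (MvPolynomial (Fin 4) R)
      [esymm (Fin 4) R 1 ^ m, esymm (Fin 4) R 1 ^ 2 - esymm (Fin 4) R 2, esymm (Fin 4) R 3,
        esymm (Fin 4) R 4] := by
  refine isRegular_of_constantCoeff_eq_zero (isWeaklyRegular_esymm_fin_four m) ?_
  simp [constantCoeff_esymm, hm, -esymm_one]

end Esymm

/-- In `R = k[x_1,…,x_4]` over a field `k` of
characteristic zero, the sequence `e_1^3, e_1^2 - e_2, e_3, e_4` is a regular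
sequence, where `e_i` denotes the `i`-th elementary symmetric polynomial. -/
theorem stmt14 {k : Type*} [Field k] [CharZero k] :
    RingTheory.Sequence.IsRegular (MvPolynomial (Fin 4) k)
      [(esymm (Fin 4) k 1) ^ 3,
       (esymm (Fin 4) k 1) ^ 2 - esymm (Fin 4) k 2,
       esymm (Fin 4) k 3,
       esymm (Fin 4) k 4] :=
  stmt14_general three_ne_zero
end

section
/- In R = k[x_1,x_2,x_3,x_4] over a field k of characteristic zero, the polynomials e_1^2, e_2, e_3, v form a regular sequence, where v = ∏_{1≤i<j≤4}(x_i - x_j) is the Vandermonde determinant. -/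
open MvPolynomial

/-!
The ring `k[x_1, …, x_n]` is obtained from `k[y_1, …, y_n]` by splitting the generic monic
polynomial with coefficients `y_i` completely, one root at a time; it is therefore free over
`k[y_1, …, y_n]`, where `y_i` acts as `e_i`. By flatness, the sequence
`e_1 ^ a_1, …, e_{n-1} ^ a_{n-1}, n ^ n * e_n ^ (n - 1)` is weakly regular, because the
corresponding sequence in the `y_i` is.

Modulo `e_1, …, e_{n-1}` one has `∏ (T + x_i) = T ^ n + e_n`. Differentiating and evaluating at the
roots shows that there the discriminant `∏_{i ≠ j} (x_j - x_i)` is `n ^ n * e_n ^ (n - 1)`, which is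
therefore a multiple of the Vandermonde product `v`. Hence a power of `n ^ n * e_n ^ (n - 1)` is a
multiple of `v` modulo `e_1 ^ a_1, …, e_{n-1} ^ a_{n-1}`, and `v` inherits regularity from it.
-/

section SplittingAlgebra

variable {K S : Type*} [CommRing K] [CommRing S] {n : ℕ}

/-- The ideal of relations `∏ (T + x_i) = f` between variables `x_1, …, x_n`, generated by the
coefficients of the difference of the two sides. Writing the factors as `T + x_i` rather than
`T - x_i` makes the coefficients of the product elementary symmetric polynomials without signs. -/
noncomputable def splittingIdeal (f : Polynomial K) (n : ℕ) : Ideal (MvPolynomial (Fin n) K) :=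
  (∏ i : Fin n, (Polynomial.X + Polynomial.C (X i)) - f.map C).contentIdeal

theorem splittingIdeal_le_ker_iff (f : Polynomial K) (φ : MvPolynomial (Fin n) K →+* S) :
    splittingIdeal f n ≤ RingHom.ker φ ↔
      ∏ i, (Polynomial.X + Polynomial.C (φ (X i))) = f.map (φ.comp C) := by
  rw [splittingIdeal, RingHom.ker, ← Ideal.map_le_iff_le_comap, le_bot_iff,
    ← Polynomial.contentIdeal_map_eq_map_contentIdeal, Polynomial.contentIdeal_eq_bot_iff,
    Polynomial.map_sub, Polynomial.map_map, sub_eq_zero]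
  simp only [Polynomial.map_prod, Polynomial.map_add, Polynomial.map_X, Polynomial.map_C]

theorem prod_X_add_C_mk_splittingIdeal (f : Polynomial K) :
    ∏ i, (Polynomial.X + Polynomial.C (Ideal.Quotient.mk (splittingIdeal f n) (X i))) =
      f.map ((Ideal.Quotient.mk (splittingIdeal f n)).comp C) :=
  (splittingIdeal_le_ker_iff f _).1 Ideal.mk_ker.ge

/-- The substitution of a root `r` into the first linear factor of `∏ (T + x_i)`, that is,
`x_0 ↦ -r`, with the remaining variables renumbered from `0`. -/
noncomputable def substRoot (K : Type*) [CommRing K] (n : ℕ) {L : Type*} [CommRing L] [Algebra K L]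
    (r : L) : MvPolynomial (Fin (n + 1)) K →ₐ[K] MvPolynomial (Fin n) L :=
  aeval (Fin.cons (-C r) X)

theorem substRoot_surjective {L : Type*} [CommRing L] [Algebra K L] {r : L}
    (hr : Function.Surjective (Polynomial.aeval r : Polynomial K →ₐ[K] L)) :
    Function.Surjective (substRoot K n r) := by
  intro p
  induction p using MvPolynomial.induction_on with
  | C a =>
    obtain ⟨q, rfl⟩ := hr a
    refine ⟨Polynomial.aeval (-X 0) q, ?_⟩
    have hr₀ : substRoot K n r (-X 0) = algebraMap L _ r := by simp [substRoot]
    rw [← Polynomial.aeval_algHom_apply, hr₀, Polynomial.aeval_algebraMap_apply, algebraMap_eq]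
  | add p q hp hq =>
    obtain ⟨p, rfl⟩ := hp
    obtain ⟨q, rfl⟩ := hq
    exact ⟨p + q, map_add _ p q⟩
  | mul_X p i hp =>
    obtain ⟨p, rfl⟩ := hp
    exact ⟨p * X i.succ, by simp [substRoot]⟩

theorem splittingIdeal_le_comap_substRoot {f : Polynomial K} {L : Type*} [CommRing L] [Algebra K L]
    {r : L} {g : Polynomial L} (hg : (Polynomial.X - Polynomial.C r) * g = f.map (algebraMap K L)) :
    splittingIdeal f (n + 1) ≤ (splittingIdeal g n).comap (substRoot K n r) := by
  let mk := Ideal.Quotient.mk (splittingIdeal g n)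
  suffices splittingIdeal f (n + 1) ≤ RingHom.ker (mk.comp (substRoot K n r).toRingHom) by
    rwa [← RingHom.comap_ker, Ideal.mk_ker] at this
  rw [splittingIdeal_le_ker_iff]
  calc ∏ i, (Polynomial.X + Polynomial.C (mk (substRoot K n r (X i))))
      = (Polynomial.X - Polynomial.C (mk (C r))) *
          ∏ i, (Polynomial.X + Polynomial.C (mk (X i))) := by
        simp [Fin.prod_univ_succ, substRoot, sub_eq_add_neg]
    _ = ((Polynomial.X - Polynomial.C r) * g).map (mk.comp C) := by
        rw [prod_X_add_C_mk_splittingIdeal, Polynomial.map_mul]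
        simp [mk]
    _ = f.map ((mk.comp (substRoot K n r).toRingHom).comp C) := by
        rw [hg, Polynomial.map_map]
        congr 1
        ext a
        simp [substRoot]

variable [Algebra K S]

theorem splittingIdeal_le_ker_aeval_iff (f : Polynomial K) (x : Fin n → S) :
    splittingIdeal f n ≤ RingHom.ker (aeval x : MvPolynomial (Fin n) K →ₐ[K] S) ↔
      ∏ i, (Polynomial.X + Polynomial.C (x i)) = f.map (algebraMap K S) :=
  (splittingIdeal_le_ker_iff f (aeval x : MvPolynomial (Fin n) K →ₐ[K] S).toRingHom).trans <| by
    simp only [AlgHom.toRingHom_eq_coe, RingHom.coe_coe, aeval_X, ← algebraMap_eq,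
      AlgHom.comp_algebraMap]

theorem prod_X_add_C_tail_eq_map {f : Polynomial K} {x : Fin (n + 1) → S}
    (hf : ∏ i, (Polynomial.X + Polynomial.C (x i)) = f.map (algebraMap K S))
    {L : Type*} [CommRing L] [Algebra K L] [Algebra L S] [IsScalarTower K L S] {r : L}
    (hx : algebraMap L S r = -x 0) {g : Polynomial L}
    (hg : (Polynomial.X - Polynomial.C r) * g = f.map (algebraMap K L)) :
    ∏ i, (Polynomial.X + Polynomial.C (Fin.tail x i)) = g.map (algebraMap L S) := by
  refine (Polynomial.monic_X_add_C (x 0)).isRegular.left ?_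
  calc (Polynomial.X + Polynomial.C (x 0)) * ∏ i, (Polynomial.X + Polynomial.C (Fin.tail x i))
      = ∏ i, (Polynomial.X + Polynomial.C (x i)) := by
        simp only [Fin.prod_univ_succ, Fin.tail]
    _ = ((Polynomial.X - Polynomial.C r) * g).map (algebraMap L S) := by
        rw [hf, hg, Polynomial.map_map, ← IsScalarTower.algebraMap_eq]
    _ = (Polynomial.X + Polynomial.C (x 0)) * g.map (algebraMap L S) := by
        rw [Polynomial.map_mul, Polynomial.map_sub, Polynomial.map_X, Polynomial.map_C, hx,
          Polynomial.C_neg, sub_neg_eq_add]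

/-- `S` is the universal splitting algebra of `f` over `K`: it is generated by the family `x`, and
every algebraic relation between the `x_i` follows from `∏ (T + x_i) = f`. -/
structure IsSplittingAlgebra (f : Polynomial K) (x : Fin n → S) : Prop where
  surjective : Function.Surjective (aeval x : MvPolynomial (Fin n) K →ₐ[K] S)
  ker_eq : RingHom.ker (aeval x : MvPolynomial (Fin n) K →ₐ[K] S) = splittingIdeal f n

namespace IsSplittingAlgebra

theorem prod_X_add_C {f : Polynomial K} {x : Fin n → S} (h : IsSplittingAlgebra f x) :
    ∏ i, (Polynomial.X + Polynomial.C (x i)) = f.map (algebraMap K S) :=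
  (splittingIdeal_le_ker_aeval_iff f x).1 h.ker_eq.ge

theorem aeval_neg_eq_zero {f : Polynomial K} {x : Fin n → S} (h : IsSplittingAlgebra f x)
    (i : Fin n) : f.aeval (-x i) = 0 := by
  rw [Polynomial.aeval_def, ← Polynomial.eval_map, ← h.prod_X_add_C, Polynomial.eval_prod]
  exact Finset.prod_eq_zero (Finset.mem_univ i) (by simp)

theorem tail {f : Polynomial K} {x : Fin (n + 1) → S} (h : IsSplittingAlgebra f x)
    {L : Type*} [CommRing L] [Algebra K L] [Algebra L S] [IsScalarTower K L S]
    {r : L} (hr : Function.Surjective (Polynomial.aeval r : Polynomial K →ₐ[K] L))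
    (hx : algebraMap L S r = -x 0) {g : Polynomial L}
    (hg : (Polynomial.X - Polynomial.C r) * g = f.map (algebraMap K L)) :
    IsSplittingAlgebra g (Fin.tail x) := by
  let π : MvPolynomial (Fin n) L →ₐ[L] S := aeval (Fin.tail x)
  have hπ (p) : π (substRoot K n r p) = aeval x p := by
    suffices (π.restrictScalars K).comp (substRoot K n r) = aeval x from DFunLike.congr_fun this p
    ext i
    refine Fin.cases ?_ (fun i => ?_) i <;> simp [substRoot, π, ← algebraMap_eq, hx, Fin.tail]
  refine ⟨fun s => ?_, le_antisymm (fun p hp => ?_) ?_⟩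
  · obtain ⟨p, rfl⟩ := h.surjective s
    exact ⟨substRoot K n r p, hπ p⟩
  · obtain ⟨q, rfl⟩ := substRoot_surjective hr p
    have hq : q ∈ splittingIdeal f (n + 1) := h.ker_eq ▸ (hπ q).symm.trans hp
    exact splittingIdeal_le_comap_substRoot hg hq
  · exact (splittingIdeal_le_ker_aeval_iff g _).2 (prod_X_add_C_tail_eq_map h.prod_X_add_C hx hg)

theorem free {f : Polynomial K} {x : Fin n → S} (h : IsSplittingAlgebra f x) (hf : f.Monic)
    (hn : f.natDegree = n) : Module.Free K S := by
  induction n generalizing K with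
  | zero =>
    have hker : splittingIdeal f 0 = ⊥ := by
      simp [splittingIdeal, Polynomial.eq_one_of_monic_natDegree_zero hf hn]
    have hinj : Function.Injective (aeval x : MvPolynomial (Fin 0) K →ₐ[K] S) :=
      (RingHom.injective_iff_ker_eq_bot _).2 (h.ker_eq.trans hker)
    exact Module.Free.of_equiv (AlgEquiv.ofBijective _ ⟨hinj, h.surjective⟩).toLinearEquiv
  | succ n ih =>
    let φ : AdjoinRoot f →+* S :=
      AdjoinRoot.lift (algebraMap K S) (-x 0) (h.aeval_neg_eq_zero 0)
    let : Algebra (AdjoinRoot f) S := φ.toAlgebra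
    have : IsScalarTower K (AdjoinRoot f) S :=
      .of_algebraMap_eq fun a => (AdjoinRoot.lift_of (h.aeval_neg_eq_zero 0)).symm
    have hroot : algebraMap (AdjoinRoot f) S (AdjoinRoot.root f) = -x 0 :=
      AdjoinRoot.lift_root (h.aeval_neg_eq_zero 0)
    have := hf.free_adjoinRoot
    have hsurj : Function.Surjective
        (Polynomial.aeval (AdjoinRoot.root f) : Polynomial K →ₐ[K] AdjoinRoot f) := fun y =>
      let ⟨p, hp⟩ := AdjoinRoot.mk_surjective y; ⟨p, (AdjoinRoot.aeval_eq p).trans hp⟩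
    have hfactor := Polynomial.mul_divByMonic_eq_iff_isRoot.2 (AdjoinRoot.isRoot_root f)
    rcases subsingleton_or_nontrivial (AdjoinRoot f) with _ | _
    · have := Module.subsingleton (AdjoinRoot f) S
      infer_instance
    have hmonic := hf.map (AdjoinRoot.of f)
    have hdeg : (f.map (AdjoinRoot.of f)).natDegree = n + 1 := (hf.natDegree_map _).trans hn
    have : Module.Free (AdjoinRoot f) S := by
      have hmonic_root := Polynomial.monic_X_sub_C (AdjoinRoot.root f)
      refine ih (h.tail hsurj hroot hfactor) (.of_mul_monic_left hmonic_root ?_) ?_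
      · rwa [hfactor]
      · rw [Polynomial.natDegree_divByMonic _ hmonic_root, hdeg,
          Polynomial.natDegree_X_sub_C, Nat.add_sub_cancel]
    exact Module.Free.trans (S := AdjoinRoot f)

end IsSplittingAlgebra

end SplittingAlgebra

section ElementarySymmetric

variable (k : Type*) [CommRing k] (n : ℕ)

/-- The endomorphism of `k[x_1, …, x_n]` sending the coefficients of the generic monic polynomial
of degree `n` to those of `∏ (T + x_i)`. In the convention of `Polynomial.freeMonic` the `i`-th
variable is the coefficient of `T ^ i`, so its image is the elementary symmetric polynomial of
degree `n - i`. -/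
noncomputable def vietaHom : MvPolynomial (Fin n) k →ₐ[k] MvPolynomial (Fin n) k :=
  aeval fun i => esymm (Fin n) k (n - i)

theorem vietaHom_X_rev (i : Fin n) : vietaHom k n (X i.rev) = esymm (Fin n) k (i + 1) := by
  rw [vietaHom, aeval_X, Fin.val_rev, Nat.sub_sub_self i.isLt]

theorem freeMonic_map_vietaHom :
    (Polynomial.freeMonic k n).map (vietaHom k n).toRingHom =
      ∏ i : Fin n, (Polynomial.X + Polynomial.C (X i)) := by
  nontriviality k
  have hdeg : (∏ i : Fin n,
      (Polynomial.X + Polynomial.C (X i : MvPolynomial (Fin n) k))).natDegree ≤ n :=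
    (Polynomial.natDegree_prod_le _ _).trans (by simp)
  refine (Polynomial.ext_iff_natDegree_le
    (Polynomial.natDegree_map_le.trans (Polynomial.natDegree_freeMonic k n).le) hdeg).2
    fun i hi => ?_
  rw [prod_X_add_C_coeff k (Fin n) i (by simpa using hi), Fintype.card_fin, Polynomial.coeff_map,
    Polynomial.coeff_freeMonic]
  rcases hi.lt_or_eq with hi | rfl
  · simp [hi, vietaHom]
  · simp

theorem mk_map_C_comp_eval₂Hom_vietaHom :
    ((Ideal.Quotient.mk (splittingIdeal (Polynomial.freeMonic k n) n)).comp (map C)).comp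
      (eval₂Hom (vietaHom k n).toRingHom X) = Ideal.Quotient.mk _ := by
  let mk := Ideal.Quotient.mk (splittingIdeal (Polynomial.freeMonic k n) n)
  refine MvPolynomial.ringHom_ext (fun p => ?_) fun i => by simp
  suffices (mk.comp (map C)).comp (vietaHom k n).toRingHom = mk.comp C by
    simpa using DFunLike.congr_fun this p
  refine MvPolynomial.ringHom_ext (fun a => by simp) fun i => ?_
  have hi : (Polynomial.freeMonic k n).coeff i = X i := by simp [Polynomial.coeff_freeMonic]
  have hprod : (Polynomial.freeMonic k n).map ((mk.comp (map C)).comp (vietaHom k n).toRingHom) =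
      (Polynomial.freeMonic k n).map (mk.comp C) := by
    rw [← prod_X_add_C_mk_splittingIdeal, ← Polynomial.map_map, freeMonic_map_vietaHom,
      Polynomial.map_prod]
    simp [mk]
  simpa only [Polynomial.coeff_map, hi] using congr_arg (fun p => p.coeff i) hprod

theorem eval₂Hom_vietaHom_map_C (p : MvPolynomial (Fin n) k) :
    eval₂Hom (vietaHom k n).toRingHom X (map C p) = p := by
  have hC : (vietaHom k n).toRingHom.comp C = C := (vietaHom k n).comp_algebraMap
  rw [coe_eval₂Hom, eval₂_map, hC, eval₂_eta]

theorem ker_eval₂Hom_vietaHom :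
    RingHom.ker (eval₂Hom (vietaHom k n).toRingHom X) =
      splittingIdeal (Polynomial.freeMonic k n) n := by
  refine le_antisymm (fun p hp => ?_) ((splittingIdeal_le_ker_iff _ _).2 ?_)
  · rw [← Ideal.Quotient.eq_zero_iff_mem, ← mk_map_C_comp_eval₂Hom_vietaHom, RingHom.comp_apply,
      RingHom.mem_ker.1 hp, map_zero]
  · simp only [eval₂Hom_X', eval₂Hom_comp_C, freeMonic_map_vietaHom]

theorem flat_vietaHom : (vietaHom k n).toRingHom.Flat := by
  rcases subsingleton_or_nontrivial k with _ | _
  · exact .of_bijective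
      ⟨Function.injective_of_subsingleton _, Function.surjective_to_subsingleton _⟩
  let := (vietaHom k n).toRingHom.toAlgebra
  have hsplit :
      IsSplittingAlgebra (Polynomial.freeMonic k n) (X : Fin n → MvPolynomial (Fin n) k) :=
    { surjective := fun p => ⟨map C p, eval₂Hom_vietaHom_map_C k n p⟩
      ker_eq := ker_eval₂Hom_vietaHom k n }
  have := hsplit.free (Polynomial.monic_freeMonic k n) (Polynomial.natDegree_freeMonic k n)
  rw [RingHom.Flat]
  infer_instance

end ElementarySymmetric

section WeaklyRegular

open RingTheory.Sequence

variable {R : Type*} [CommRing R]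

theorem isWeaklyRegular_append_singleton_iff {rs : List R} {r : R} :
    IsWeaklyRegular R (rs ++ [r]) ↔
      IsWeaklyRegular R rs ∧ ∀ p, r * p ∈ Ideal.ofList rs → p ∈ Ideal.ofList rs := by
  rw [isWeaklyRegular_append_iff, isWeaklyRegular_singleton_iff,
    isSMulRegular_quotient_iff_mem_of_smul_mem]
  simp only [smul_eq_mul, Ideal.mul_top]

theorem isWeaklyRegular_map_of_flat {S : Type*} [CommRing S] {f : R →+* S} (hf : f.Flat)
    {rs : List R} (h : IsWeaklyRegular R rs) : IsWeaklyRegular S (rs.map f) :=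
  let := f.toAlgebra
  have : Module.Flat R S := hf
  h.of_flat

theorem ideal_ofList_ofFn {n : ℕ} (f : Fin n → R) :
    Ideal.ofList (List.ofFn f) = Ideal.span (Set.range f) :=
  congr_arg Ideal.span (Set.ext fun _ => List.mem_ofFn)

theorem mem_of_mul_mem_of_mem_radical_sup_span {J : Ideal R} {u v : R}
    (hu : ∀ p, u * p ∈ J → p ∈ J) (huv : u ∈ (J ⊔ Ideal.span {v}).radical) {p : R}
    (hp : v * p ∈ J) : p ∈ J := by
  obtain ⟨N, hN⟩ := huv
  obtain ⟨j, hj, w, hw⟩ : ∃ j ∈ J, ∃ w, j + w * v = u ^ N := by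
    simpa [Submodule.mem_sup, Ideal.mem_span_singleton'] using hN
  have hcancel (M : ℕ) (h : u ^ M * p ∈ J) : p ∈ J := by
    induction M with
    | zero => rwa [pow_zero, one_mul] at h
    | succ M ih => exact ih (hu _ (by rwa [← mul_assoc, ← pow_succ']))
  refine hcancel N ?_
  rw [← hw, add_mul, mul_assoc]
  exact J.add_mem (J.mul_mem_right _ hj) (J.mul_mem_left _ hp)

theorem isRegular_of_isWeaklyRegular_of_map_eq_zero {S : Type*} [Semiring S] [Nontrivial S]
    (f : R →+* S) {rs : List R} (h : IsWeaklyRegular R rs) (hf : ∀ r ∈ rs, f r = 0) :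
    IsRegular R rs := by
  refine ⟨h, ?_⟩
  have hle : Ideal.ofList rs ≤ RingHom.ker f := Ideal.span_le.2 hf
  rw [smul_eq_mul, Ideal.mul_top]
  exact (ne_top_of_le_ne_top (RingHom.ker_ne_top f) hle).symm

variable {σ ι : Type*}

theorem mem_span_range_X_pow_iff {s : ι → σ} {a : ι → ℕ} {p : MvPolynomial σ R} :
    p ∈ Ideal.span (Set.range fun j => X (s j) ^ a j) ↔ ∀ d ∈ p.support, ∃ j, a j ≤ d (s j) := by
  classical
  have hrange : (Set.range fun j => (X (s j) ^ a j : MvPolynomial σ R)) =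
      (fun d => monomial d 1) '' Set.range fun j => Finsupp.single (s j) (a j) := by
    simp only [← Set.range_comp, Function.comp_def, X_pow_eq_monomial]
  simp only [hrange, mem_ideal_span_monomial_image, Set.exists_range_iff, Finsupp.single_le_iff]

theorem mem_span_range_X_pow_of_C_mul_X_pow_mul_mem {s : ι → σ} {a : ι → ℕ} {i : σ}
    (hi : i ∉ Set.range s) {c : R} (hc : c ∈ nonZeroDivisors R) {b : ℕ} {p : MvPolynomial σ R}
    (hp : C c * X i ^ b * p ∈ Ideal.span (Set.range fun j => X (s j) ^ a j)) :
    p ∈ Ideal.span (Set.range fun j => X (s j) ^ a j) := by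
  classical
  rw [mem_span_range_X_pow_iff] at hp ⊢
  intro d hd
  obtain ⟨j, hj⟩ := hp (Finsupp.single i b + d) <| by
    rw [mem_support_iff, mul_assoc, coeff_C_mul, X_pow_eq_monomial, coeff_monomial_mul, one_mul]
    exact fun h => mem_support_iff.1 hd ((mul_left_mem_nonZeroDivisors_eq_zero_iff hc).1 h)
  have hij : i ≠ s j := fun h => hi ⟨j, h.symm⟩
  exact ⟨j, by simpa [hij] using hj⟩

theorem isWeaklyRegular_ofFn_X_pow {n : ℕ} {s : Fin n → σ} (hs : Function.Injective s)
    (a : Fin n → ℕ) :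
    IsWeaklyRegular (MvPolynomial σ R)
      (List.ofFn fun j => (X (s j) : MvPolynomial σ R) ^ a j) := by
  induction n with
  | zero => simp
  | succ n ih =>
    rw [List.ofFn_succ', List.concat_eq_append, isWeaklyRegular_append_singleton_iff]
    refine ⟨ih (hs.comp (Fin.castSucc_injective n)) _, fun p hp => ?_⟩
    have hlast : s (Fin.last n) ∉ Set.range fun j : Fin n => s j.castSucc := fun ⟨j, hj⟩ =>
      j.castSucc_ne_last (hs hj)
    rw [ideal_ofList_ofFn] at hp ⊢
    exact mem_span_range_X_pow_of_C_mul_X_pow_mul_mem hlast (one_mem (nonZeroDivisors R))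
      (by simpa using hp)

end WeaklyRegular

section Vandermonde

variable {S : Type*} [CommRing S] {n : ℕ} {x : Fin n → S} {b : S}

theorem prod_erase_sub_eq_of_prod_X_add_C_eq
    (h : ∏ i, (Polynomial.X + Polynomial.C (x i)) = Polynomial.X ^ n + Polynomial.C b) (i : Fin n) :
    ∏ j ∈ Finset.univ.erase i, (x j - x i) = n * (-x i) ^ (n - 1) := by
  have hder := congr_arg (fun p => (Polynomial.derivative p).eval (-x i)) h
  simp only [Polynomial.derivative_prod_finset, Polynomial.eval_finsetSum] at hder
  rw [Finset.sum_eq_single_of_mem i (Finset.mem_univ i)] at hder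
  · simpa [Polynomial.eval_prod, neg_add_eq_sub, Polynomial.derivative_X_pow] using hder
  · intro j _ hji
    have hmem : i ∈ Finset.univ.erase j := Finset.mem_erase.2 ⟨hji.symm, Finset.mem_univ i⟩
    simp [Polynomial.eval_prod, Finset.prod_eq_zero hmem]

theorem prod_prod_erase_sub_eq_of_prod_X_add_C_eq
    (h : ∏ i, (Polynomial.X + Polynomial.C (x i)) = Polynomial.X ^ n + Polynomial.C b) :
    ∏ i, ∏ j ∈ Finset.univ.erase i, (x j - x i) = (n : S) ^ n * (∏ i, x i) ^ (n - 1) := by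
  calc ∏ i, ∏ j ∈ Finset.univ.erase i, (x j - x i)
      = ∏ i, (n * (-1) ^ (n - 1) * x i ^ (n - 1)) :=
        Finset.prod_congr rfl fun i _ => by
          rw [prod_erase_sub_eq_of_prod_X_add_C_eq h, neg_pow, mul_assoc]
    _ = (n : S) ^ n * (-1) ^ (n * (n - 1)) * (∏ i, x i) ^ (n - 1) := by
        simp only [Finset.prod_mul_distrib, Finset.prod_const, Finset.card_univ, Fintype.card_fin,
          Finset.prod_pow, ← pow_mul, mul_comm n]
    _ = (n : S) ^ n * (∏ i, x i) ^ (n - 1) := by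
        rw [(Nat.even_mul_pred_self n).neg_one_pow, mul_one]

theorem prod_sub_dvd_of_prod_X_add_C_eq
    (h : ∏ i, (Polynomial.X + Polynomial.C (x i)) = Polynomial.X ^ n + Polynomial.C b) :
    ∏ p ∈ Finset.univ.filter (fun p : Fin n × Fin n => p.1 < p.2), (x p.1 - x p.2) ∣
      (n : S) ^ n * (∏ i, x i) ^ (n - 1) := by
  calc ∏ p ∈ Finset.univ.filter (fun p : Fin n × Fin n => p.1 < p.2), (x p.1 - x p.2)
      ∣ ∏ p ∈ Finset.univ.filter (fun p : Fin n × Fin n => p.1 < p.2), (x p.2 - x p.1) :=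
        Finset.prod_dvd_prod_of_dvd _ _ fun p _ => dvd_sub_comm.1 dvd_rfl
    _ ∣ ∏ p ∈ Finset.univ.filter (fun p : Fin n × Fin n => p.2 ≠ p.1), (x p.2 - x p.1) :=
        Finset.prod_dvd_prod_of_subset _ _ _ <|
          Finset.monotone_filter_right _ fun p _ (hp : p.1 < p.2) => hp.ne'
    _ = ∏ i, ∏ j ∈ Finset.univ.erase i, (x j - x i) := by
        simp only [Finset.prod_filter, Fintype.prod_prod_type, ← Finset.filter_ne']
    _ = (n : S) ^ n * (∏ i, x i) ^ (n - 1) := prod_prod_erase_sub_eq_of_prod_X_add_C_eq h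

end Vandermonde

section RegularSequence

open RingTheory.Sequence

variable {k : Type*} [CommRing k]

theorem isWeaklyRegular_ofFn_esymm_pow_append {n : ℕ} (a : Fin n → ℕ) {c : k}
    (hc : c ∈ nonZeroDivisors k) (b : ℕ) :
    IsWeaklyRegular (MvPolynomial (Fin (n + 1)) k)
      ((List.ofFn fun i : Fin n => esymm (Fin (n + 1)) k (i + 1) ^ a i) ++
        [C c * esymm (Fin (n + 1)) k (n + 1) ^ b]) := by
  have hinj : Function.Injective fun i : Fin n => i.castSucc.rev :=
    Fin.rev_injective.comp (Fin.castSucc_injective n)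
  have hlast : (Fin.last n).rev ∉ Set.range fun i : Fin n => i.castSucc.rev := fun ⟨i, hi⟩ =>
    i.castSucc_ne_last (Fin.rev_injective hi)
  have hX : IsWeaklyRegular (MvPolynomial (Fin (n + 1)) k)
      ((List.ofFn fun i : Fin n => (X i.castSucc.rev : MvPolynomial (Fin (n + 1)) k) ^ a i) ++
        [C c * X (Fin.last n).rev ^ b]) := by
    refine isWeaklyRegular_append_singleton_iff.2
      ⟨isWeaklyRegular_ofFn_X_pow hinj a, fun p hp => ?_⟩
    rw [ideal_ofList_ofFn] at hp ⊢
    exact mem_span_range_X_pow_of_C_mul_X_pow_mul_mem hlast hc hp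
  have h := isWeaklyRegular_map_of_flat (flat_vietaHom k (n + 1)) hX
  simpa only [List.map_append, List.map_ofFn, List.map_singleton, Function.comp_def,
    AlgHom.toRingHom_eq_coe, RingHom.coe_coe, map_mul, map_pow, vietaHom_X_rev, algHom_C,
    algebraMap_eq, Fin.val_castSucc, Fin.val_last] using h

theorem esymm_card_eq_prod (σ : Type*) [Fintype σ] :
    esymm σ k (Fintype.card σ) = ∏ i, X i := by
  rw [esymm, ← Finset.card_univ, Finset.powersetCard_self, Finset.sum_singleton]

theorem prod_X_add_C_of_esymm_eq_zero {S : Type*} [CommRing S] {n : ℕ}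
    {φ : MvPolynomial (Fin (n + 1)) k →+* S}
    (hφ : ∀ i : Fin n, φ (esymm (Fin (n + 1)) k (i + 1)) = 0) :
    ∏ i, (Polynomial.X + Polynomial.C (φ (X i))) =
      Polynomial.X ^ (n + 1) + Polynomial.C (φ (esymm (Fin (n + 1)) k (n + 1))) := by
  have hvieta := congr_arg (Polynomial.map φ) (prod_C_add_X_eq_sum_esymm k (Fin (n + 1)))
  simp only [Polynomial.map_prod, Polynomial.map_sum, Fintype.card_fin, Polynomial.map_add,
    Polynomial.map_mul, Polynomial.map_pow, Polynomial.map_X, Polynomial.map_C] at hvieta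
  rw [hvieta, Finset.sum_range_succ, Finset.sum_range_succ', ← Fin.sum_univ_eq_sum_range]
  simp [hφ]

theorem C_mul_esymm_pow_mem_span_esymm_sup_span_prod_sub (n : ℕ) :
    C (((n + 1 : ℕ) : k) ^ (n + 1)) * esymm (Fin (n + 1)) k (n + 1) ^ n ∈
      Ideal.span (Set.range fun i : Fin n => esymm (Fin (n + 1)) k (i + 1)) ⊔
      Ideal.span {∏ p ∈ Finset.univ.filter (fun p : Fin (n + 1) × Fin (n + 1) => p.1 < p.2),
        (X p.1 - X p.2)} := by
  let I := Ideal.span (Set.range fun i : Fin n => esymm (Fin (n + 1)) k (i + 1))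
  have hI (i : Fin n) : Ideal.Quotient.mk I (esymm (Fin (n + 1)) k (i + 1)) = 0 :=
    Ideal.Quotient.eq_zero_iff_mem.2 (Ideal.subset_span ⟨i, rfl⟩)
  have hesymm : esymm (Fin (n + 1)) k (n + 1) = ∏ i, X i := by
    simpa using esymm_card_eq_prod (k := k) (Fin (n + 1))
  rw [sup_comm, ← Ideal.mem_quotient_iff_mem_sup, Ideal.map_span, Set.image_singleton,
    Ideal.mem_span_singleton]
  simpa [hesymm] using prod_sub_dvd_of_prod_X_add_C_eq (prod_X_add_C_of_esymm_eq_zero hI)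

theorem isWeaklyRegular_ofFn_esymm_pow_append_prod_sub {n : ℕ}
    (hn : ((n + 1 : ℕ) : k) ∈ nonZeroDivisors k) (a : Fin n → ℕ) :
    IsWeaklyRegular (MvPolynomial (Fin (n + 1)) k)
      ((List.ofFn fun i : Fin n => esymm (Fin (n + 1)) k (i + 1) ^ a i) ++
        [∏ p ∈ Finset.univ.filter (fun p : Fin (n + 1) × Fin (n + 1) => p.1 < p.2),
          (X p.1 - X p.2)]) := by
  have h := isWeaklyRegular_append_singleton_iff.1
    (isWeaklyRegular_ofFn_esymm_pow_append a (pow_mem hn (n + 1)) n)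
  refine isWeaklyRegular_append_singleton_iff.2 ⟨h.1, fun p hp =>
    mem_of_mul_mem_of_mem_radical_sup_span h.2 ?_ hp⟩
  refine (sup_le ?_ (le_sup_right.trans Ideal.le_radical) : _ ≤ Ideal.radical _)
    (C_mul_esymm_pow_mem_span_esymm_sup_span_prod_sub n)
  rw [Ideal.span_le, ideal_ofList_ofFn]
  rintro _ ⟨i, rfl⟩
  exact ⟨a i, Ideal.mem_sup_left (Ideal.subset_span ⟨i, rfl⟩)⟩

theorem constantCoeff_esymm_of_ne_zero (σ : Type*) [Fintype σ] {m : ℕ} (hm : m ≠ 0) :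
    constantCoeff (esymm σ k m) = 0 := by
  rw [esymm, map_sum]
  refine Finset.sum_eq_zero fun t ht => ?_
  have ht0 : t.card ≠ 0 := (Finset.mem_powersetCard.1 ht).2 ▸ hm
  simp [ht0]

theorem constantCoeff_prod_sub_eq_zero (n : ℕ) :
    constantCoeff (∏ p ∈ Finset.univ.filter (fun p : Fin (n + 2) × Fin (n + 2) => p.1 < p.2),
      (X p.1 - X p.2) : MvPolynomial (Fin (n + 2)) k) = 0 := by
  rw [map_prod]
  exact Finset.prod_eq_zero (i := (0, 1)) (by simp) (by simp)

theorem stmt15_general [Nontrivial k] {n : ℕ} (hn : ((n + 2 : ℕ) : k) ∈ nonZeroDivisors k)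
    {a : Fin (n + 1) → ℕ} (ha : ∀ i, a i ≠ 0) :
    IsRegular (MvPolynomial (Fin (n + 2)) k)
      ((List.ofFn fun i : Fin (n + 1) => esymm (Fin (n + 2)) k (i + 1) ^ a i) ++
        [∏ p ∈ Finset.univ.filter (fun p : Fin (n + 2) × Fin (n + 2) => p.1 < p.2),
          (X p.1 - X p.2)]) := by
  refine isRegular_of_isWeaklyRegular_of_map_eq_zero constantCoeff
    (isWeaklyRegular_ofFn_esymm_pow_append_prod_sub hn a) fun r hr => ?_
  obtain hr | hr := List.mem_append.1 hr
  · obtain ⟨i, rfl⟩ := List.mem_ofFn.1 hr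
    rw [map_pow, constantCoeff_esymm_of_ne_zero _ i.val.succ_ne_zero, zero_pow (ha i)]
  · rw [List.mem_singleton.1 hr, constantCoeff_prod_sub_eq_zero]

end RegularSequence

/-- In `R = k[x_1,…,x_4]` over a field `k` of
characteristic zero, the polynomials `e_1^2, e_2, e_3, v` form a regular
sequence, where `v = ∏_{1 ≤ i < j ≤ 4} (x_i - x_j)` is the Vandermonde
determinant. -/
theorem stmt15 {k : Type*} [Field k] [CharZero k] :
    RingTheory.Sequence.IsRegular (MvPolynomial (Fin 4) k)
      [(esymm (Fin 4) k 1) ^ 2,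
       esymm (Fin 4) k 2,
       esymm (Fin 4) k 3,
       ∏ p ∈ Finset.univ.filter (fun p : Fin 4 × Fin 4 => p.1 < p.2),
         (X p.1 - X p.2)] := by
  have hn : ((2 + 2 : ℕ) : k) ∈ nonZeroDivisors k :=
    mem_nonZeroDivisors_of_ne_zero (Nat.cast_ne_zero.2 (by decide))
  simpa using stmt15_general (a := ![2, 1, 1]) hn (by decide)
end
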